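/- arXiv:0707.4083 — 11 statements merged into one kernel-verified Lean document; each statement's English description precedes it below -/
import Mathlib

section
/- Let l ≥ 1, F = GF(2^{2l}), t = 2^l, and L* = {α ∈ F : α ≠ 0 and α^{t−1} ≠ 1}. If S ⊆ L* is a codeword of the binary Goppa code Γ(L*, X^{t−1}+1), then ∑_{α ∈ S} (α·(α^{t−1}+1))⁻¹ = 0 in F. (This is the paper's Lemma 1: the extra parity-check row [1/(α(α^{t−1}+1))]_{α∈L*} is a linear combination of the rows of the parity-check matrix H₁*.) -/
open Finset

/-!
Multiplied by `α`, the Goppa polynomial becomes the trace `T(α) = α ^ t + α` from `GF(t ^ 2)` to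
`GF(t)`, so the rows of the parity-check matrix are `α ^ (j + 1) / T(α)` and the extra row is
`1 / T(α)`. The single row with `j + 1 = t / 2` suffices. As `T(α) ^ t = T(α)`, adding to
`∑ α ^ (t / 2) / T(α) = 0` its own `t`-th power gives `∑ T(α) ^ (t / 2) / T(α) = 0`, and squaring
turns each summand into `T(α) ^ t / T(α) ^ 2 = 1 / T(α)`.

Only the linearity of Frobenius over the field `K` of code symbols matters. For `K` with `r`
elements the last step raises to the `r`-th power, and the extra row is `1 / T(α) ^ (r - 1)`.
-/

theorem mul_pow_sub_one_add_one {R : Type*} [Semiring R] {n : ℕ} (hn : n ≠ 0) (a : R) :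
    a * (a ^ (n - 1) + 1) = a ^ n + a := by
  rw [mul_add, mul_one, mul_pow_sub_one hn]

theorem galoisField_pow_char_pow (p : ℕ) [Fact p.Prime] {n : ℕ} (hn : n ≠ 0)
    (α : GaloisField p n) : α ^ p ^ n = α := by
  have := Fintype.ofFinite (GaloisField p n)
  rw [← GaloisField.card p n hn, Nat.card_eq_fintype_card, FiniteField.pow_card]

section Frobenius

variable {K R ι : Type*} [Field K] [Fintype K] [CommRing R] [Algebra K R]
  {s : Finset ι} {c : ι → K}

theorem frobeniusAlgHom_pow_apply (n : ℕ) (x : R) :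
    (FiniteField.frobeniusAlgHom K R ^ n) x = x ^ Fintype.card K ^ n := by
  rw [AlgHom.coe_pow, FiniteField.coe_frobeniusAlgHom, pow_iterate]

variable (K) in
theorem add_pow_card_pow (n : ℕ) (x y : R) :
    (x + y) ^ Fintype.card K ^ n = x ^ Fintype.card K ^ n + y ^ Fintype.card K ^ n := by
  simp only [← frobeniusAlgHom_pow_apply, map_add]

theorem sum_smul_pow_card_pow_eq_zero {f : ι → R} (hsum : ∑ i ∈ s, c i • f i = 0) (n : ℕ) :
    ∑ i ∈ s, c i • f i ^ Fintype.card K ^ n = 0 := by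
  simp only [← frobeniusAlgHom_pow_apply, ← map_smul, ← map_sum, hsum, map_zero]

variable (K) in
theorem trace_pow_card_pow_eq_self {l : ℕ} {α : R} (hα : α ^ Fintype.card K ^ (2 * l) = α) :
    (α ^ Fintype.card K ^ l + α) ^ Fintype.card K ^ l = α ^ Fintype.card K ^ l + α := by
  rw [add_pow_card_pow K, ← pow_mul, ← pow_add, ← two_mul, hα, add_comm]

variable {F : Type*} [Field F] [Algebra K F]

theorem sum_smul_trace_pow_div_trace_eq_zero {l k : ℕ} {α : ι → F}
    (hα : ∀ i ∈ s, α i ^ Fintype.card K ^ (2 * l) = α i)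
    (hrow : ∑ i ∈ s, c i • (α i ^ Fintype.card K ^ k / (α i ^ Fintype.card K ^ l + α i)) = 0) :
    ∑ i ∈ s, c i • ((α i ^ Fintype.card K ^ l + α i) ^ Fintype.card K ^ k /
      (α i ^ Fintype.card K ^ l + α i)) = 0 := by
  have hconj : ∑ i ∈ s, c i • ((α i ^ Fintype.card K ^ l) ^ Fintype.card K ^ k /
      (α i ^ Fintype.card K ^ l + α i)) = 0 := by
    rw [← sum_smul_pow_card_pow_eq_zero hrow l]
    refine sum_congr rfl fun i hi ↦ ?_
    rw [div_pow, trace_pow_card_pow_eq_self K (hα i hi), pow_right_comm]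
  simp only [add_pow_card_pow K k, add_div, smul_add, sum_add_distrib, hconj, hrow, add_zero]

theorem sum_smul_inv_pow_card_sub_one_eq_zero {m : ℕ} {T : ι → F}
    (hT : ∀ i ∈ s, T i ^ Fintype.card K ^ (m + 1) = T i) (hT₀ : ∀ i ∈ s, T i ≠ 0)
    (hsum : ∑ i ∈ s, c i • (T i ^ Fintype.card K ^ m / T i) = 0) :
    ∑ i ∈ s, c i • (T i ^ (Fintype.card K - 1))⁻¹ = 0 := by
  rw [← sum_smul_pow_card_pow_eq_zero hsum 1]
  refine sum_congr rfl fun i hi ↦ ?_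
  rw [pow_one, div_pow, ← pow_mul, ← pow_succ, hT i hi,
    ← mul_pow_sub_one Fintype.card_ne_zero (T i), div_mul_cancel_left₀ (hT₀ i hi)]

end Frobenius

theorem stmt_0_general {K F : Type*} [Field K] [Fintype K] [Field F] [Algebra K F] {m q : ℕ}
    (hq : q = Fintype.card K ^ (m + 1)) {S : Finset F} (c : F → K)
    (hF : ∀ α ∈ S, α ^ Fintype.card K ^ (2 * (m + 1)) = α)
    (hS : ∀ α ∈ S, α ≠ 0 ∧ α ^ (q - 1) ≠ -1)
    (hrow : ∑ α ∈ S, c α • (α ^ (Fintype.card K ^ m - 1) * (α ^ (q - 1) + 1)⁻¹) = 0) :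
    ∑ α ∈ S, c α • ((α * (α ^ (q - 1) + 1)) ^ (Fintype.card K - 1))⁻¹ = 0 := by
  have hq₀ : q ≠ 0 := hq ▸ pow_ne_zero _ Fintype.card_ne_zero
  have htrace₀ : ∀ α ∈ S, α ^ q + α ≠ 0 := fun α hα ↦ by
    rw [← mul_pow_sub_one_add_one hq₀]
    exact mul_ne_zero (hS α hα).1 fun h ↦ (hS α hα).2 (eq_neg_of_add_eq_zero_left h)
  have hrow_trace : ∑ α ∈ S, c α • (α ^ Fintype.card K ^ m / (α ^ q + α)) = 0 := by
    rw [← hrow]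
    refine sum_congr rfl fun α hα ↦ ?_
    rw [← mul_pow_sub_one_add_one hq₀, ← mul_pow_sub_one (pow_ne_zero m Fintype.card_ne_zero) α,
      mul_div_mul_left _ _ (hS α hα).1, div_eq_mul_inv]
  simp only [mul_pow_sub_one_add_one hq₀]
  subst hq
  exact sum_smul_inv_pow_card_sub_one_eq_zero (fun α hα ↦ trace_pow_card_pow_eq_self K (hF α hα))
    htrace₀ (sum_smul_trace_pow_div_trace_eq_zero hF hrow_trace)

/-- Paper's Lemma 1: for the binary Goppa code `Γ(L*, X^(t-1)+1)` over `F = GF(2^(2l))`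
with `L* = {α ∈ F : α ≠ 0 ∧ α^(t-1) ≠ 1}`, every codeword `S` also satisfies the extra
parity check `∑_{α ∈ S} (α (α^(t-1)+1))⁻¹ = 0`. -/
theorem stmt_0 (l : ℕ) (hl : 1 ≤ l) (t : ℕ) (ht : t = 2 ^ l)
    (S : Finset (GaloisField 2 (2 * l)))
    (hS : ∀ α ∈ S, α ≠ 0 ∧ α ^ (t - 1) ≠ 1)
    (hcw : ∀ j < t - 1, ∑ α ∈ S, α ^ j * (α ^ (t - 1) + 1)⁻¹ = 0) :
    ∑ α ∈ S, (α * (α ^ (t - 1) + 1))⁻¹ = 0 := by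
  obtain ⟨m, rfl⟩ := Nat.exists_eq_add_of_le' hl
  have hrow := hcw (2 ^ m - 1) (by have := Nat.two_pow_pos m; omega)
  have hF := galoisField_pow_char_pow 2 (n := 2 * (m + 1)) (by omega)
  have hsum := stmt_0_general (K := ZMod 2) (m := m) (q := t) (by simpa using ht) (fun _ ↦ 1)
    (by simpa using fun α _ ↦ hF α) (by simpa [CharTwo.neg_eq] using hS) (by simpa using hrow)
  simpa only [ZMod.card, Nat.add_one_sub_one, pow_one, one_smul] using hsum
end

section
/- Let l ≥ 1, F = GF(2^{2l}), t = 2^l, and L* = {α ∈ F : α ≠ 0 and α^{t−1} ≠ 1} (so that both X^{t−1}+1 and X^t+X are nonvanishing on L*). Then the binary Goppa codes Γ(L*, X^{t−1}+1) and Γ(L*, X^t+X) are equal: a finite subset S ⊆ L* is a codeword of Γ(L*, X^{t−1}+1) if and only if S is a codeword of Γ(L*, X^t+X). (Paper's Lemma 2, with A = 1.) -/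
open Finset

/-!
Write `q = 2 ^ l`, let `A ^ (q + 1) = 1`, and for `α` in the support put `b = α ^ q + A * α`.
The parity checks of `X ^ (q - 1) + A` are `∑ α ^ j / b = 0` for `0 < j < q`, so the code of
`X ^ q + A * X` imposes only the one additional check `∑ 1 / b = 0`. Squaring the check with
`j = q / 2` gives `∑ α ^ q / b ^ 2 = 0`. Since `α ^ (q ^ 2) = α`, raising to the power `q`
exchanges `α` and `α ^ q` and maps `b` to `A⁻¹ * b`, so also `∑ α / b ^ 2 = 0`. The first sum plus
`A` times the second is `∑ b / b ^ 2 = ∑ 1 / b`.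
-/

section Goppa

open Polynomial

variable {K : Type*} [Field K]

/-- `S` is the support of a word of the binary Goppa code with Goppa polynomial `G`. The location
set is left implicit: it is any set containing `S` on which `G` does not vanish. At a root of `G`
the inverse takes its junk value `0`, so the notion is meaningful only if `S` avoids the roots. -/
def IsGoppaCodeword (G : K[X]) (S : Finset K) : Prop :=
  ∀ j < G.natDegree, ∑ α ∈ S, α ^ j * (G.eval α)⁻¹ = 0

theorem sum_pow_succ_mul_inv_eval_X_mul (G : K[X]) {S : Finset K} (hS : 0 ∉ S) (j : ℕ) :
    ∑ α ∈ S, α ^ (j + 1) * ((X * G).eval α)⁻¹ = ∑ α ∈ S, α ^ j * (G.eval α)⁻¹ := by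
  refine sum_congr rfl fun α hα ↦ ?_
  have hα₀ : α ≠ 0 := ne_of_mem_of_not_mem hα hS
  rw [eval_mul, eval_X, mul_inv, pow_succ, mul_assoc, mul_inv_cancel_left₀ hα₀]

theorem isGoppaCodeword_X_mul_iff {G : K[X]} {S : Finset K} (hG : G ≠ 0) (hS : 0 ∉ S) :
    IsGoppaCodeword (X * G) S ↔
      ∑ α ∈ S, ((X * G).eval α)⁻¹ = 0 ∧ IsGoppaCodeword G S := by
  simp only [IsGoppaCodeword, natDegree_X_mul hG, Nat.forall_lt_succ_left,
    sum_pow_succ_mul_inv_eval_X_mul G hS, pow_zero, one_mul]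

theorem X_mul_X_pow_sub_one_add_C {R : Type*} [CommSemiring R] {n : ℕ} (hn : n ≠ 0) (A : R) :
    X * (X ^ (n - 1) + C A) = X ^ n + C A * X := by
  rw [mul_add, mul_pow_sub_one hn, mul_comm X (C A)]

theorem isGoppaCodeword_X_pow_add_C_iff (n : ℕ) (A : K) (S : Finset K) :
    IsGoppaCodeword (X ^ n + C A) S ↔ ∀ j < n, ∑ α ∈ S, α ^ j * (α ^ n + A)⁻¹ = 0 := by
  simp [IsGoppaCodeword]

theorem isGoppaCodeword_X_pow_add_C_mul_X_iff {n : ℕ} (hn : 1 < n) (A : K) (S : Finset K) :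
    IsGoppaCodeword (X ^ n + C A * X) S ↔
      ∀ j < n, ∑ α ∈ S, α ^ j * (α ^ n + A * α)⁻¹ = 0 := by
  have natDegree_eq : (X ^ n + C A * X).natDegree = n := by
    rw [natDegree_add_eq_left_of_natDegree_lt, natDegree_X_pow]
    calc (C A * X).natDegree ≤ (X : K[X]).natDegree := natDegree_C_mul_le A X
      _ < (X ^ n : K[X]).natDegree := by rwa [natDegree_X, natDegree_X_pow]
  simp [IsGoppaCodeword, natDegree_eq]

end Goppa

section Conjugation

variable {K : Type*} [Field K] (p : ℕ) [ExpChar K p] {n : ℕ} {A : K}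

theorem pow_add_mul_pow_expChar_pow {α : K} (hA : A ^ (p ^ n + 1) = 1)
    (hα : (α ^ p ^ n) ^ p ^ n = α) :
    (α ^ p ^ n + A * α) ^ p ^ n = A⁻¹ * (α ^ p ^ n + A * α) := by
  have hA₀ : A ≠ 0 := (IsUnit.of_pow_eq_one hA (Nat.succ_ne_zero _)).ne_zero
  have conj_A : A ^ p ^ n = A⁻¹ := eq_inv_of_mul_eq_one_left (by rw [← pow_succ, hA])
  rw [add_pow_expChar_pow, mul_pow, hα, conj_A, mul_add, inv_mul_cancel_left₀ hA₀, add_comm]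

theorem sum_mul_inv_pow_pow_expChar_pow {S : Finset K} (hA : A ^ (p ^ n + 1) = 1)
    (hS : ∀ α ∈ S, (α ^ p ^ n) ^ p ^ n = α) (m : ℕ) :
    (∑ α ∈ S, α * (α ^ p ^ n + A * α)⁻¹ ^ m) ^ p ^ n =
      A ^ m * ∑ α ∈ S, α ^ p ^ n * (α ^ p ^ n + A * α)⁻¹ ^ m := by
  rw [sum_pow_char_pow, mul_sum]
  refine sum_congr rfl fun α hα ↦ ?_
  rw [mul_pow, pow_right_comm, inv_pow, pow_add_mul_pow_expChar_pow p hA (hS α hα), mul_inv,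
    inv_inv, mul_pow, mul_left_comm]

end Conjugation

theorem galoisField_two_mul_pow_pow {p : ℕ} [Fact p.Prime] {n : ℕ} (hn : n ≠ 0)
    (α : GaloisField p (2 * n)) : (α ^ p ^ n) ^ p ^ n = α := by
  have := Fintype.ofFinite (GaloisField p (2 * n))
  have card_eq : p ^ n * p ^ n = Fintype.card (GaloisField p (2 * n)) := by
    rw [← pow_add, ← two_mul, ← GaloisField.card p (2 * n) (by lia), Nat.card_eq_fintype_card]
  rw [← pow_mul, card_eq, FiniteField.pow_card]

section CharTwo

variable {K : Type*} [Field K] [CharP K 2] {l : ℕ} {A : K} {S : Finset K}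

theorem sum_inv_eq_zero_of_sum_pow_mul_inv_eq_zero (hA : A ^ (2 ^ (l + 1) + 1) = 1)
    (hS : ∀ α ∈ S, (α ^ 2 ^ (l + 1)) ^ 2 ^ (l + 1) = α)
    (hb : ∀ α ∈ S, α ^ 2 ^ (l + 1) + A * α ≠ 0)
    (h : ∑ α ∈ S, α ^ 2 ^ l * (α ^ 2 ^ (l + 1) + A * α)⁻¹ = 0) :
    ∑ α ∈ S, (α ^ 2 ^ (l + 1) + A * α)⁻¹ = 0 := by
  set b : K → K := fun α ↦ α ^ 2 ^ (l + 1) + A * α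
  have squared : ∑ α ∈ S, α ^ 2 ^ (l + 1) * (b α)⁻¹ ^ 2 = 0 := by
    have := congrArg (· ^ 2) h
    simpa only [sum_pow_char, mul_pow, ← pow_mul, ← pow_succ, zero_pow two_ne_zero] using this
  have conjugated : ∑ α ∈ S, α * (b α)⁻¹ ^ 2 = 0 := by
    refine eq_zero_of_pow_eq_zero (n := 2 ^ (l + 1)) ?_
    rw [sum_mul_inv_pow_pow_expChar_pow 2 hA hS, squared, mul_zero]
  calc ∑ α ∈ S, (b α)⁻¹
      = ∑ α ∈ S, (α ^ 2 ^ (l + 1) + A * α) * (b α)⁻¹ ^ 2 :=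
        sum_congr rfl fun α hα ↦ by rw [sq, mul_inv_cancel_left₀ (hb α hα)]
    _ = ∑ α ∈ S, α ^ 2 ^ (l + 1) * (b α)⁻¹ ^ 2 + A * ∑ α ∈ S, α * (b α)⁻¹ ^ 2 := by
        simp only [add_mul, sum_add_distrib, mul_sum, mul_assoc]
    _ = 0 := by rw [squared, conjugated, mul_zero, add_zero]

open Polynomial in
theorem stmt_1_general (hl : l ≠ 0) (hA : A ^ (2 ^ l + 1) = 1)
    (hS : ∀ α ∈ S, (α ^ 2 ^ l) ^ 2 ^ l = α) (hS₀ : 0 ∉ S)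
    (hSA : ∀ α ∈ S, α ^ (2 ^ l - 1) ≠ A) :
    IsGoppaCodeword (X ^ (2 ^ l - 1) + C A) S ↔ IsGoppaCodeword (X ^ 2 ^ l + C A * X) S := by
  have hG : (X ^ (2 ^ l - 1) + C A : K[X]) ≠ 0 :=
    X_pow_add_C_ne_zero (Nat.sub_pos_of_lt (Nat.one_lt_two_pow hl)) A
  have X_mul_G := X_mul_X_pow_sub_one_add_C (pow_ne_zero l two_ne_zero) A
  have eval_X_mul_G (α : K) :
      (X * (X ^ (2 ^ l - 1) + C A)).eval α = α ^ 2 ^ l + A * α := by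
    simp [X_mul_G]
  rw [← X_mul_G, isGoppaCodeword_X_mul_iff hG hS₀, iff_and_self]
  intro h
  obtain ⟨k, rfl⟩ := Nat.exists_eq_add_one_of_ne_zero hl
  have middle_check : ∑ α ∈ S, α ^ 2 ^ k * (α ^ 2 ^ (k + 1) + A * α)⁻¹ = 0 := by
    have two_pow_k := Nat.sub_add_cancel (Nat.one_le_two_pow (n := k))
    have := h (2 ^ k - 1) (by rw [natDegree_X_pow_add_C]; lia)
    rw [← sum_pow_succ_mul_inv_eval_X_mul _ hS₀, two_pow_k] at this
    simpa only [eval_X_mul_G] using this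
  have eval_ne_zero (α : K) (hα : α ∈ S) : α ^ 2 ^ (k + 1) + A * α ≠ 0 := by
    rw [← eval_X_mul_G, eval_mul, eval_X]
    refine mul_ne_zero (ne_of_mem_of_not_mem hα hS₀) ?_
    simpa [CharTwo.add_eq_zero] using hSA α hα
  simpa only [eval_X_mul_G] using
    sum_inv_eq_zero_of_sum_pow_mul_inv_eq_zero hA hS eval_ne_zero middle_check

end CharTwo

/-- Paper's Lemma 2 (with `A = 1`): over `F = GF(2^(2l))` with `t = 2^l` and
`L* = {α : α ≠ 0 ∧ α^(t-1) ≠ 1}`, the binary Goppa codes `Γ(L*, X^(t-1)+1)` and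
`Γ(L*, X^t+X)` have exactly the same codewords. -/
theorem stmt_1 (l : ℕ) (hl : 1 ≤ l) (t : ℕ) (ht : t = 2 ^ l)
    (S : Finset (GaloisField 2 (2 * l)))
    (hS : ∀ α ∈ S, α ≠ 0 ∧ α ^ (t - 1) ≠ 1) :
    (∀ j < t - 1, ∑ α ∈ S, α ^ j * (α ^ (t - 1) + 1)⁻¹ = 0) ↔
      (∀ j < t, ∑ α ∈ S, α ^ j * (α ^ t + α)⁻¹ = 0) := by
  subst ht
  simpa only [isGoppaCodeword_X_pow_add_C_iff, one_mul,
    isGoppaCodeword_X_pow_add_C_mul_X_iff (Nat.one_lt_two_pow (Nat.ne_zero_of_lt hl))] using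
    stmt_1_general (A := 1) (Nat.ne_zero_of_lt hl) (one_pow _)
      (fun α _ ↦ galoisField_two_mul_pow_pow (Nat.ne_zero_of_lt hl) α)
      (fun h ↦ (hS 0 h).1 rfl) (fun α hα ↦ (hS α hα).2)
end

section
/- Let l ≥ 1, F = GF(2^{2l}), t = 2^l, and L₁ = {α ∈ F : α^{t−1} ≠ 1} (note 0 ∈ L₁). Every codeword S of the binary Goppa code Γ(L₁, X^{t−1}+1) satisfies that the cardinality of S \ {0} is even. (This is the all-ones parity-check row [1 … 1 0] derived for the matrix H₁ in Section 2.) -/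
open Finset
open scoped Classical

/-!
For `α ≠ 0` with `α ^ (t * t) = α`, the element `u = α ^ (t - 1)` has `u ^ t = u⁻¹`, so
`y = (u + 1)⁻¹` satisfies `y + y ^ t = (u + 1)⁻¹ + (u⁻¹ + 1)⁻¹ = 1`. The map `y ↦ y + y ^ t` is
additive, so applied to the sum of the `y`'s over the nonzero locations of a codeword it counts
these locations modulo the characteristic. In characteristic two the parity check `j = 0` forces
that sum to be `1` or `0`, according to whether the codeword contains `0`, and the map kills both.
-/

theorem pow_sub_one_pow_mul_pow_sub_one {G₀ : Type*} [GroupWithZero G₀] {a : G₀} {t : ℕ}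
    (ha : a ≠ 0) (hfix : a ^ (t * t) = a) : (a ^ (t - 1)) ^ t * a ^ (t - 1) = 1 := by
  cases t with
  | zero => simp
  | succ k =>
    have hexp : k * (k + 1) + k + 1 = (k + 1) * (k + 1) := by ring
    refine mul_right_cancel₀ ha ?_
    rw [Nat.add_sub_cancel, one_mul, ← pow_mul, ← pow_add, ← pow_succ, hexp, hfix]

section Field

variable {K : Type*} [Field K]

theorem inv_add_one_add_inv_add_one_of_mul_eq_one {u v : K} (huv : v * u = 1) (hu : u + 1 ≠ 0) :
    (u + 1)⁻¹ + (v + 1)⁻¹ = 1 := by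
  have hv : v + 1 ≠ 0 := fun h => hu (by linear_combination u * h - huv)
  field_simp
  linear_combination -huv

theorem inv_pow_sub_one_add_one_add_pow_eq_one (p : ℕ) [ExpChar K p] (l : ℕ) {α : K} (hα : α ≠ 0)
    (hfix : α ^ (p ^ l * p ^ l) = α) (hG : α ^ (p ^ l - 1) + 1 ≠ 0) :
    (α ^ (p ^ l - 1) + 1)⁻¹ + ((α ^ (p ^ l - 1) + 1)⁻¹) ^ p ^ l = 1 := by
  rw [inv_pow, add_pow_expChar_pow, one_pow]
  exact inv_add_one_add_inv_add_one_of_mul_eq_one (pow_sub_one_pow_mul_pow_sub_one hα hfix) hG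

theorem sum_inv_pow_sub_one_add_one_add_pow_eq_card (p : ℕ) [ExpChar K p] (l : ℕ) {T : Finset K}
    (hT : ∀ α ∈ T, α ≠ 0) (hfix : ∀ α ∈ T, α ^ (p ^ l * p ^ l) = α)
    (hG : ∀ α ∈ T, α ^ (p ^ l - 1) + 1 ≠ 0) :
    ∑ α ∈ T, (α ^ (p ^ l - 1) + 1)⁻¹ + (∑ α ∈ T, (α ^ (p ^ l - 1) + 1)⁻¹) ^ p ^ l = #T := by
  rw [sum_pow_char_pow, ← sum_add_distrib, card_eq_sum_ones, Nat.cast_sum, Nat.cast_one]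
  exact sum_congr rfl fun α hα =>
    inv_pow_sub_one_add_one_add_pow_eq_one p l (hT α hα) (hfix α hα) (hG α hα)

theorem sum_inv_pow_add_one_eq_sum_sdiff_zero_add {n : ℕ} {S : Finset K} (hn : 0 ∈ S → n ≠ 0) :
    ∑ α ∈ S, (α ^ n + 1)⁻¹ = ∑ α ∈ S \ {0}, (α ^ n + 1)⁻¹ + if 0 ∈ S then 1 else 0 := by
  rw [sdiff_singleton_eq_erase]
  split_ifs with h0
  · rw [← sum_erase_add _ _ h0, zero_pow (hn h0), zero_add, inv_one]
  · rw [erase_eq_of_notMem h0, add_zero]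

theorem stmt_2_general [CharP K 2] (l : ℕ) (S : Finset K)
    (hfix : ∀ α ∈ S, α ^ (2 ^ l * 2 ^ l) = α) (hS : ∀ α ∈ S, α ^ (2 ^ l - 1) ≠ 1)
    (hsum : ∑ α ∈ S, (α ^ (2 ^ l - 1) + 1)⁻¹ = 0) : Even #(S \ {0}) := by
  have hmem {α : K} (hα : α ∈ S \ {0}) : α ∈ S ∧ α ≠ 0 := by simpa using hα
  have hcount := sum_inv_pow_sub_one_add_one_add_pow_eq_card 2 l (T := S \ {0})
    (fun α hα => (hmem hα).2) (fun α hα => hfix α (hmem hα).1)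
    (fun α hα => CharTwo.add_eq_zero.not.mpr (hS α (hmem hα).1))
  have hsum_nonzero : ∑ α ∈ S \ {0}, (α ^ (2 ^ l - 1) + 1)⁻¹ = if 0 ∈ S then 1 else 0 := by
    have hn (h0 : 0 ∈ S) : 2 ^ l - 1 ≠ 0 := fun hn => hS 0 h0 (by rw [hn, pow_zero])
    rwa [sum_inv_pow_add_one_eq_sum_sdiff_zero_add hn, CharTwo.add_eq_zero] at hsum
  have hcard : (#(S \ {0}) : K) = 0 := by
    rw [← hcount, hsum_nonzero]
    split_ifs <;> simp [CharTwo.add_self_eq_zero]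
  exact even_iff_two_dvd.mpr ((CharP.cast_eq_zero_iff K 2 _).mp hcard)

end Field

theorem galoisField_two_mul_pow_eq_self {p : ℕ} [Fact p.Prime] {l : ℕ} (hl : l ≠ 0)
    (α : GaloisField p (2 * l)) : α ^ (p ^ l * p ^ l) = α := by
  have : Fintype (GaloisField p (2 * l)) := Fintype.ofFinite _
  rw [← pow_add, ← two_mul, ← GaloisField.card p (2 * l) (by lia), Nat.card_eq_fintype_card,
    FiniteField.pow_card]

/-- Section 2 of the paper (all-ones parity row of `H₁`): over `F = GF(2^(2l))`,
`t = 2^l`, `L₁ = {α : α^(t-1) ≠ 1}` (which contains `0`), every codeword `S` of the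
binary Goppa code `Γ(L₁, X^(t-1)+1)` has `|S \ {0}|` even. -/
theorem stmt_2 (l : ℕ) (hl : 1 ≤ l) (t : ℕ) (ht : t = 2 ^ l)
    (S : Finset (GaloisField 2 (2 * l)))
    (hS : ∀ α ∈ S, α ^ (t - 1) ≠ 1)
    (hcw : ∀ j < t - 1, ∑ α ∈ S, α ^ j * (α ^ (t - 1) + 1)⁻¹ = 0) :
    Even (S \ {0}).card := by
  subst ht
  have ht_pos : 0 < 2 ^ l - 1 := Nat.sub_pos_of_lt (Nat.one_lt_two_pow (by lia))
  exact stmt_2_general l S (fun α _ => galoisField_two_mul_pow_eq_self (by lia) α) hS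
    (by simpa only [pow_zero, one_mul] using hcw 0 ht_pos)
end

section
/- Let l ≥ 1, F = GF(2^{2l}), t = 2^l, A ∈ F with A ≠ 0, and β ∈ F, and set C = A^t β^t + Aβ. Let L₂ = {α ∈ F : A^t α^t + Aα ≠ 0} and L₃ = {α ∈ F : A^t α^t + Aα + C ≠ 0}. Then a finite subset S ⊆ L₃ is a codeword of the binary Goppa code Γ(L₃, A^t X^t + A X + C) if and only if its translate {α + β : α ∈ S} (which is contained in L₂) is a codeword of Γ(L₂, A^t X^t + A X). (Paper's Lemma 3: Γ(L₂,G₂) ≡ Γ(L₃,G₃) via the substitution x ↦ x + β.) -/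
open Finset
open scoped Classical

/-!
The polynomial `a X ^ t + b X` is additive when `t` is a power of the characteristic, so adding the
constant `a β ^ t + b β` to it amounts to the substitution `X ↦ X + β`. The codewords of a Goppa
code are cut out by the vanishing of all moments of order `< t`, and the binomial theorem expresses
the moments of a translate through the moments of the same or lower order.
-/

/-- `S` is the support of a binary word satisfying the parity checks of the alternant code of order
`t` with column multipliers `w`. The Goppa code `Γ(L, G)` is the case `w α = (G α)⁻¹` and
`t = deg G`; the location set `L` is left implicit, since only its points in `S` enter the
checks. -/
def IsAlternantCodeword {R : Type*} [CommSemiring R] (t : ℕ) (w : R → R) (S : Finset R) : Prop :=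
  ∀ j < t, ∑ α ∈ S, α ^ j * w α = 0

theorem sum_add_pow_mul_eq_sum_range {ι R : Type*} [CommSemiring R] (s : Finset ι) (x w : ι → R)
    (b : R) (j : ℕ) :
    ∑ i ∈ s, (x i + b) ^ j * w i =
      ∑ m ∈ range (j + 1), b ^ (j - m) * j.choose m * ∑ i ∈ s, x i ^ m * w i := by
  simp_rw [add_pow, sum_mul, mul_sum]
  rw [sum_comm]
  exact sum_congr rfl fun m _ => sum_congr rfl fun i _ => by ring

namespace IsAlternantCodeword

variable {R : Type*} [CommRing R] [DecidableEq R] {t : ℕ} {w : R → R} {S : Finset R}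

theorem image_add_right (h : IsAlternantCodeword t w S) (b : R) :
    IsAlternantCodeword t (fun γ => w (γ - b)) (S.image (· + b)) := by
  intro j hj
  rw [sum_image (add_left_injective b).injOn]
  simp only [add_sub_cancel_right]
  rw [sum_add_pow_mul_eq_sum_range]
  refine sum_eq_zero fun m hm => ?_
  have hmt : m < t := (mem_range_succ_iff.mp hm).trans_lt hj
  rw [h m hmt, mul_zero]

theorem image_add_right_iff (b : R) :
    IsAlternantCodeword t w (S.image (· + b)) ↔ IsAlternantCodeword t (fun α => w (α + b)) S := by
  constructor <;> intro h
  · simpa only [image_image, Function.comp_def, add_neg_cancel_right, image_id', sub_neg_eq_add]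
      using h.image_add_right (-b)
  · simpa only [sub_add_cancel] using h.image_add_right b

end IsAlternantCodeword

theorem mul_add_pow_expChar_pow_add_mul {R : Type*} [CommSemiring R] (p : ℕ) [ExpChar R p] (n : ℕ)
    (a b x y : R) :
    a * (x + y) ^ p ^ n + b * (x + y) =
      a * x ^ p ^ n + b * x + (a * y ^ p ^ n + b * y) := by
  rw [add_pow_expChar_pow]
  ring

theorem stmt_4_general {K : Type*} [Field K] [DecidableEq K] (p : ℕ) [ExpChar K p] (n : ℕ)
    (a b β : K) (S : Finset K)
    (hS : ∀ α ∈ S, a * α ^ p ^ n + b * α + (a * β ^ p ^ n + b * β) ≠ 0) :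
    (∀ γ ∈ S.image (· + β), a * γ ^ p ^ n + b * γ ≠ 0) ∧
      (IsAlternantCodeword (p ^ n)
          (fun α => (a * α ^ p ^ n + b * α + (a * β ^ p ^ n + b * β))⁻¹) S ↔
        IsAlternantCodeword (p ^ n) (fun γ => (a * γ ^ p ^ n + b * γ)⁻¹) (S.image (· + β))) := by
  simp only [← mul_add_pow_expChar_pow_add_mul] at hS ⊢
  exact ⟨forall_mem_image.mpr hS,
    (IsAlternantCodeword.image_add_right_iff (w := fun γ => (a * γ ^ p ^ n + b * γ)⁻¹) β).symm⟩

/-- Paper's Lemma 3: over `F = GF(2^(2l))`, `t = 2^l`, `A ≠ 0`, `β ∈ F`,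
`C = A^t β^t + A β`, a finite `S ⊆ L₃ = {α : A^t α^t + A α + C ≠ 0}` is a codeword of
`Γ(L₃, A^t X^t + A X + C)` iff its translate `{α + β : α ∈ S}` (contained in
`L₂ = {α : A^t α^t + A α ≠ 0}`) is a codeword of `Γ(L₂, A^t X^t + A X)`. -/
theorem stmt_4 (l : ℕ) (hl : 1 ≤ l) (t : ℕ) (ht : t = 2 ^ l)
    (A β : GaloisField 2 (2 * l)) (hA : A ≠ 0)
    (C : GaloisField 2 (2 * l)) (hC : C = A ^ t * β ^ t + A * β)
    (S : Finset (GaloisField 2 (2 * l)))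
    (hS : ∀ α ∈ S, A ^ t * α ^ t + A * α + C ≠ 0) :
    (∀ γ ∈ S.image (· + β), A ^ t * γ ^ t + A * γ ≠ 0) ∧
      ((∀ j < t, ∑ α ∈ S, α ^ j * (A ^ t * α ^ t + A * α + C)⁻¹ = 0) ↔
        (∀ j < t, ∑ γ ∈ S.image (· + β), γ ^ j * (A ^ t * γ ^ t + A * γ)⁻¹ = 0)) := by
  subst ht hC
  exact stmt_4_general 2 l (A ^ 2 ^ l) A β S hS
end

section
/- Let l ≥ 1, F = GF(2^{2l}), t = 2^l, A ∈ F with A ≠ 0, and L₄ = {α ∈ F : A^t α^t + A^{t−1} α^{t−1} + 1 ≠ 0} (note 0 ∈ L₄). Every codeword S of the binary Goppa code Γ(L₄, A^t X^t + A^{t−1} X^{t−1} + 1) satisfies 0 ∉ S; that is, all codewords have value zero at the position corresponding to the element 0 of L₄. (Paper's Lemma 4.) -/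
open Finset

/-!
Put `q = t`, `b = A α` and `g(b) = b ^ q + b ^ (q - 1) + 1`, so that `G(α) = g(b)`. Since
`b ^ q ^ 2 = b`, the Frobenius `x ↦ x ^ q` satisfies `b ^ (q - 1) * g(b) ^ q = g(b)` for `b ≠ 0`;
that is, `G(α)⁻¹ ^ q = A ^ (q - 1) * (α ^ (q - 1) * G(α)⁻¹)` for `α ≠ 0`, whereas at `α = 0` the
left side is `1` and the right side is `0`. So the `q`-th power of the parity check `j = 0`, minus
`A ^ (q - 1)` times the parity check `j = q - 1`, is exactly the entry of the codeword at `0`.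
This uses only that the entries are fixed by `x ↦ x ^ q`, so it covers `q`-ary codes over any field
with `q ^ 2` elements.
-/

theorem exists_ringHom_eq_pow_of_card_eq_pow {F : Type*} [Field F] [Finite F] {q n : ℕ}
    (hn : n ≠ 0) (hcard : Nat.card F = q ^ n) : ∃ φ : F →+* F, ∀ x, φ x = x ^ q := by
  have : Fintype F := Fintype.ofFinite F
  obtain ⟨p, hchar⟩ := CharP.exists F
  obtain ⟨m, hp, hm⟩ := FiniteField.card F p
  have : Fact p.Prime := ⟨hp⟩
  have q_dvd : q ∣ p ^ (m : ℕ) := by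
    rw [← hm, ← Nat.card_eq_fintype_card, hcard]
    exact dvd_pow_self q hn
  obtain ⟨k, -, rfl⟩ := (Nat.dvd_prime_pow hp).1 q_dvd
  exact ⟨iterateFrobenius F p k, iterateFrobenius_def p k⟩

section PowRingHom

variable {F : Type*} [Field F] {q : ℕ} {φ : F →+* F}

theorem ne_zero_of_ringHom_eq_pow (hφ : ∀ x, φ x = x ^ q) : q ≠ 0 := by
  rintro rfl
  simpa using hφ 0

theorem pow_sub_one_mul_trinomial_pow (hφ : ∀ x, φ x = x ^ q) {b : F} (hb : b ≠ 0)
    (hbq : b ^ q ^ 2 = b) :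
    b ^ (q - 1) * (b ^ q + b ^ (q - 1) + 1) ^ q = b ^ q + b ^ (q - 1) + 1 := by
  obtain ⟨u, rfl⟩ := Nat.exists_eq_succ_of_ne_zero (ne_zero_of_ringHom_eq_pow hφ)
  simp only [Nat.succ_eq_add_one, Nat.add_sub_cancel] at *
  have frobenius_trinomial :
      (b ^ (u + 1) + b ^ u + 1) ^ (u + 1) = b + b ^ (u * (u + 1)) + 1 := by
    rw [← hφ, map_add, map_add, map_one, hφ, hφ, ← pow_mul, ← pow_mul, ← sq, hbq]
  have pow_mul_pow_eq_one : b ^ u * b ^ (u * (u + 1)) = 1 :=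
    mul_left_cancel₀ hb <| calc
      b * (b ^ u * b ^ (u * (u + 1))) = b ^ (u + 1) ^ 2 := by ring
      _ = b * 1 := by rw [hbq, mul_one]
  rw [frobenius_trinomial]
  linear_combination pow_mul_pow_eq_one

theorem inv_trinomial_pow [DecidableEq F] (hφ : ∀ x, φ x = x ^ q) (hq : 1 < q) {b : F}
    (hbq : b ^ q ^ 2 = b) (hne : b ^ q + b ^ (q - 1) + 1 ≠ 0) :
    (b ^ q + b ^ (q - 1) + 1)⁻¹ ^ q =
      b ^ (q - 1) * (b ^ q + b ^ (q - 1) + 1)⁻¹ + if b = 0 then 1 else 0 := by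
  rcases eq_or_ne b 0 with rfl | hb
  · simp [zero_pow (by omega : q ≠ 0), zero_pow (by omega : q - 1 ≠ 0)]
  · rw [if_neg hb, add_zero, inv_pow, eq_mul_inv_iff_mul_eq₀ hne,
      inv_mul_eq_iff_eq_mul₀ (pow_ne_zero q hne), mul_comm]
    exact (pow_sub_one_mul_trinomial_pow hφ hb hbq).symm

end PowRingHom

theorem stmt_5_general {F : Type*} [Field F] [Finite F] {q : ℕ} (hcard : Nat.card F = q ^ 2)
    {A : F} (hA : A ≠ 0) {S : Finset F}
    (hS : ∀ α ∈ S, A ^ q * α ^ q + A ^ (q - 1) * α ^ (q - 1) + 1 ≠ 0)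
    {c : F → F} (hc : ∀ α ∈ S, c α ^ q = c α)
    (hcw_zero : ∑ α ∈ S, c α * (A ^ q * α ^ q + A ^ (q - 1) * α ^ (q - 1) + 1)⁻¹ = 0)
    (hcw_top : ∑ α ∈ S,
      c α * (α ^ (q - 1) * (A ^ q * α ^ q + A ^ (q - 1) * α ^ (q - 1) + 1)⁻¹) = 0)
    (hzero : 0 ∈ S) : c 0 = 0 := by
  classical
  have : Fintype F := Fintype.ofFinite F
  obtain ⟨φ, hφ⟩ := exists_ringHom_eq_pow_of_card_eq_pow two_ne_zero hcard
  have hq : 1 < q := (Nat.one_lt_pow_iff two_ne_zero).1 (hcard ▸ Finite.one_lt_card)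
  have pow_q_sq (b : F) : b ^ q ^ 2 = b := by
    rw [← hcard, Nat.card_eq_fintype_card, FiniteField.pow_card]
  simp only [← mul_pow] at hS hcw_zero hcw_top
  set g : F → F := fun α ↦ (A * α) ^ q + (A * α) ^ (q - 1) + 1 with hg
  have inv_pow_eq : ∀ α ∈ S,
      (g α)⁻¹ ^ q = (A * α) ^ (q - 1) * (g α)⁻¹ + if α = 0 then 1 else 0 := fun α hα ↦ by
    simpa [hA] using inv_trinomial_pow hφ hq (pow_q_sq (A * α)) (hS α hα)
  calc
    c 0 = A ^ (q - 1) * ∑ α ∈ S, c α * (α ^ (q - 1) * (g α)⁻¹)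
        + ∑ α ∈ S, c α * if α = 0 then 1 else 0 := by simp [hg, hcw_top, hzero]
    _ = ∑ α ∈ S, c α * (g α)⁻¹ ^ q := by
      rw [mul_sum, ← sum_add_distrib]
      refine sum_congr rfl fun α hα ↦ ?_
      rw [inv_pow_eq α hα]
      ring
    _ = φ (∑ α ∈ S, c α * (g α)⁻¹) := by
      rw [map_sum]
      exact sum_congr rfl fun α hα ↦ by rw [hφ, mul_pow, hc α hα]
    _ = 0 := by rw [hcw_zero, map_zero]

/-- Paper's Lemma 4: over `F = GF(2^(2l))`, `t = 2^l`, `A ≠ 0`,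
`L₄ = {α : A^t α^t + A^(t-1) α^(t-1) + 1 ≠ 0}` (note `0 ∈ L₄`), every codeword `S` of
the binary Goppa code `Γ(L₄, A^t X^t + A^(t-1) X^(t-1) + 1)` satisfies `0 ∉ S`. -/
theorem stmt_5 (l : ℕ) (hl : 1 ≤ l) (t : ℕ) (ht : t = 2 ^ l)
    (A : GaloisField 2 (2 * l)) (hA : A ≠ 0)
    (S : Finset (GaloisField 2 (2 * l)))
    (hS : ∀ α ∈ S, A ^ t * α ^ t + A ^ (t - 1) * α ^ (t - 1) + 1 ≠ 0)
    (hcw : ∀ j < t,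
      ∑ α ∈ S, α ^ j * (A ^ t * α ^ t + A ^ (t - 1) * α ^ (t - 1) + 1)⁻¹ = 0) :
    0 ∉ S := by
  have hcard : Nat.card (GaloisField 2 (2 * l)) = t ^ 2 := by
    rw [GaloisField.card 2 (2 * l) (by omega), ht, ← pow_mul, mul_comm]
  have t_pos : 0 < t := ht ▸ Nat.two_pow_pos l
  exact fun hzero ↦ one_ne_zero <| stmt_5_general hcard hA hS (c := 1) (by simp)
    (by simpa using hcw 0 t_pos) (by simpa using hcw (t - 1) (by omega)) hzero
end

section
/- Let l ≥ 1, F = GF(2^{2l}), t = 2^l, L₄ = {α ∈ F : α^t + α^{t−1} + 1 ≠ 0}, and L₅ = L₄ \ {0}. For every finite subset S ⊆ L₅: S is a codeword of the binary Goppa code Γ(L₄, X^t + X^{t−1} + 1) if and only if S is a codeword of Γ(L₅, X^{t+1} + X^t + X). (Paper's Lemma 7: Γ(L₄,G₄) ≡ Γ(L₅,G₅) where G₅(x) = x·G₄(x); equivalently, the parity-check matrices H₅ and H₄* coincide.) -/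
open Finset

/-!
Put `G = X^t + X^(t-1) + 1` and `g = X * G = X^(t+1) + X^t + X`, with syndromes `s_j` of `g`. The
`j`-th syndrome of `G` is `s_(j+1)`, so the point is that `s_0` vanishes when `s_1, …, s_t` do. For
`α` in `GF(t²)`, the value `g(α)` is the norm plus the trace of `α` over `GF(t)`, hence lies in
`GF(t)`. Let `b_j` be the syndromes of `g²`. Expanding `g⁻¹ = g · (g²)⁻¹` gives
`s_j = b_(j+t+1) + b_(j+t) + b_(j+1)`, Frobenius gives `s_j² = b_(2j)`, and `g(α) ∈ GF(t)` gives
`b_t^t = b_1`. Eliminating the `b_j` from the relations for `s_0` and `s_1` expresses `s_0` as a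
polynomial in `s_1`, `s_(t/2)` and `s_(t/2+1)` without constant term.
-/

section Syndrome

variable {F : Type*} [Field F]

/-- The `j`-th syndrome of the binary vector with support `S` for the Goppa code of `g`: the vector
is a codeword iff the syndromes of index less than the degree of `g` vanish. The Goppa polynomial
enters only through its values, so `g` is a function; a zero of `g` in `S` contributes nothing,
since `0⁻¹ = 0`. -/
def goppaSyndrome (g : F → F) (S : Finset F) (j : ℕ) : F :=
  ∑ α ∈ S, α ^ j * (g α)⁻¹

theorem goppaSyndrome_id_mul_succ (g : F → F) {S : Finset F} (hS : ∀ α ∈ S, α ≠ 0) (j : ℕ) :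
    goppaSyndrome (fun α ↦ α * g α) S (j + 1) = goppaSyndrome g S j :=
  sum_congr rfl fun α hα ↦ by
    rw [mul_inv, pow_succ, mul_assoc, mul_inv_cancel_left₀ (hS α hα)]

theorem goppaSyndrome_pow_expChar_pow (p : ℕ) [ExpChar F p] (n : ℕ) (g : F → F) (S : Finset F)
    (j : ℕ) : goppaSyndrome g S j ^ p ^ n = goppaSyndrome (g ^ p ^ n) S (j * p ^ n) := by
  simp only [goppaSyndrome, sum_pow_char_pow, mul_pow, inv_pow, pow_mul, Pi.pow_apply]

end Syndrome

section NormAddTrace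

/-- The value at `α` of `X ^ (t + 1) + X ^ t + X`, which for `α` in the field with `t ^ 2` elements
is the norm plus the trace of `α` over the subfield with `t` elements. -/
def normAddTrace {R : Type*} [CommSemiring R] (t : ℕ) (α : R) : R :=
  α ^ (t + 1) + α ^ t + α

theorem normAddTrace_eq_mul {R : Type*} [CommSemiring R] {t : ℕ} (ht : t ≠ 0) (α : R) :
    normAddTrace t α = α * (α ^ t + α ^ (t - 1) + 1) := by
  rw [normAddTrace, mul_add, mul_add, mul_pow_sub_one ht, pow_succ', mul_one]

theorem normAddTrace_pow_eq_self {R : Type*} [CommSemiring R] (p : ℕ) [ExpChar R p] {n : ℕ} {α : R}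
    (hα : (α ^ p ^ n) ^ p ^ n = α) :
    normAddTrace (p ^ n) α ^ p ^ n = normAddTrace (p ^ n) α := by
  simp only [normAddTrace, add_pow_expChar_pow, pow_succ, mul_pow, hα]
  ring

variable {F : Type*} [Field F]

theorem goppaSyndrome_normAddTrace_succ {t : ℕ} (ht : t ≠ 0) {S : Finset F}
    (hS : ∀ α ∈ S, α ≠ 0) (j : ℕ) :
    goppaSyndrome (normAddTrace t) S (j + 1) =
      goppaSyndrome (fun α ↦ α ^ t + α ^ (t - 1) + 1) S j := by
  rw [funext (normAddTrace_eq_mul ht), goppaSyndrome_id_mul_succ _ hS]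

theorem goppaSyndrome_normAddTrace (t : ℕ) (S : Finset F) (j : ℕ) :
    goppaSyndrome (normAddTrace t) S j =
      goppaSyndrome (normAddTrace t ^ 2) S (j + t + 1) +
        goppaSyndrome (normAddTrace t ^ 2) S (j + t) +
          goppaSyndrome (normAddTrace t ^ 2) S (j + 1) := by
  simp only [goppaSyndrome, ← sum_add_distrib, Pi.pow_apply]
  refine sum_congr rfl fun α _ ↦ ?_
  have inv_eq : (normAddTrace t α)⁻¹ = normAddTrace t α * (normAddTrace t α ^ 2)⁻¹ := by
    simpa [sq, mul_assoc] using (inv_mul_mul_self (normAddTrace t α)⁻¹).symm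
  calc α ^ j * (normAddTrace t α)⁻¹
      = α ^ j * (α ^ (t + 1) + α ^ t + α) * (normAddTrace t α ^ 2)⁻¹ := by
        rw [inv_eq, ← mul_assoc, ← normAddTrace]
    _ = _ := by ring

theorem goppaSyndrome_normAddTrace_sq_pow (p : ℕ) [ExpChar F p] {n : ℕ} {S : Finset F}
    (hS : ∀ α ∈ S, (α ^ p ^ n) ^ p ^ n = α) :
    goppaSyndrome (normAddTrace (p ^ n) ^ 2) S (p ^ n) ^ p ^ n =
      goppaSyndrome (normAddTrace (p ^ n) ^ 2) S 1 := by
  rw [goppaSyndrome_pow_expChar_pow]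
  refine sum_congr rfl fun α hα ↦ ?_
  simp only [Pi.pow_apply]
  rw [pow_mul, hS α hα, pow_right_comm, normAddTrace_pow_eq_self p (hS α hα), pow_one]

theorem goppaSyndrome_normAddTrace_zero [CharP F 2] {k : ℕ} {S : Finset F}
    (hS : ∀ α ∈ S, (α ^ 2 ^ (k + 1)) ^ 2 ^ (k + 1) = α) :
    let s := goppaSyndrome (normAddTrace (2 ^ (k + 1))) S
    s 0 = s 1 + s 1 ^ 2 + s (2 ^ k + 1) ^ 2 + s (2 ^ k) ^ 2 + (s (2 ^ k) ^ 2) ^ 2 ^ (k + 1) := by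
  intro s
  set t := 2 ^ (k + 1) with ht
  let b := goppaSyndrome (normAddTrace t ^ 2) S
  have s_sq (j : ℕ) : s j ^ 2 = b (j * 2) := by
    simpa only [pow_one] using goppaSyndrome_pow_expChar_pow 2 1 (normAddTrace t) S j
  have s_half_sq : s (2 ^ k) ^ 2 = b t := by rw [s_sq, ht, pow_succ]
  have s_half_succ_sq : s (2 ^ k + 1) ^ 2 = b (t + 2) := by rw [s_sq, add_mul, ht, pow_succ]
  have s_zero : s 0 = b (t + 1) + b t + b 1 := by
    simpa only [zero_add] using goppaSyndrome_normAddTrace t S 0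
  have s_one : s 1 = b (t + 2) + b (t + 1) + b 2 := by
    simpa only [add_comm 1 t] using goppaSyndrome_normAddTrace t S 1
  have b_one : b t ^ t = b 1 := goppaSyndrome_normAddTrace_sq_pow 2 hS
  rw [s_half_sq, b_one, s_half_succ_sq, s_sq, one_mul, s_one, s_zero]
  linear_combination -(b (t + 2) + b 2) * CharTwo.two_eq_zero (R := F)

end NormAddTrace

theorem galoisField_pow_card (p : ℕ) [Fact p.Prime] (n : ℕ) (α : GaloisField p n) :
    α ^ p ^ n = α := by
  rcases eq_or_ne n 0 with rfl | hn
  · rw [pow_zero, pow_one]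
  · have := Fintype.ofFinite (GaloisField p n)
    rw [← GaloisField.card p n hn, Nat.card_eq_fintype_card, FiniteField.pow_card]

theorem stmt_8_general {F : Type*} [Field F] [CharP F 2] {l : ℕ} (hl : 1 ≤ l) {S : Finset F}
    (hfix : ∀ α ∈ S, α ^ 2 ^ (2 * l) = α)
    (hS : ∀ α ∈ S, α ≠ 0 ∧ α ^ 2 ^ l + α ^ (2 ^ l - 1) + 1 ≠ 0) :
    (∀ j < 2 ^ l, ∑ α ∈ S, α ^ j * (α ^ 2 ^ l + α ^ (2 ^ l - 1) + 1)⁻¹ = 0) ↔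
      (∀ j < 2 ^ l + 1, ∑ α ∈ S, α ^ j * (α ^ (2 ^ l + 1) + α ^ 2 ^ l + α)⁻¹ = 0) := by
  obtain ⟨k, rfl⟩ := Nat.exists_eq_add_of_le' hl
  let s := goppaSyndrome (normAddTrace (2 ^ (k + 1))) S
  have s_succ (j : ℕ) : s (j + 1) =
      ∑ α ∈ S, α ^ j * (α ^ 2 ^ (k + 1) + α ^ (2 ^ (k + 1) - 1) + 1)⁻¹ :=
    goppaSyndrome_normAddTrace_succ (by positivity) (fun α hα ↦ (hS α hα).1) j
  change _ ↔ ∀ j < 2 ^ (k + 1) + 1, s j = 0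
  simp only [← s_succ, Nat.forall_lt_succ_left, iff_and_self]
  intro h
  have half_lt : 2 ^ k < 2 ^ (k + 1) := Nat.pow_lt_pow_succ one_lt_two
  have s_one : s 1 = 0 := h 0 (by positivity)
  have s_half : s (2 ^ k) = 0 := by
    simpa only [Nat.sub_add_cancel Nat.one_le_two_pow] using h (2 ^ k - 1) (by omega)
  have s_half_succ : s (2 ^ k + 1) = 0 := h (2 ^ k) half_lt
  have pow_pow_eq_self : ∀ α ∈ S, (α ^ 2 ^ (k + 1)) ^ 2 ^ (k + 1) = α := fun α hα ↦ by
    rw [← pow_mul, ← pow_add, ← two_mul, hfix α hα]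
  calc s 0 = s 1 + s 1 ^ 2 + s (2 ^ k + 1) ^ 2 + s (2 ^ k) ^ 2 + (s (2 ^ k) ^ 2) ^ 2 ^ (k + 1) :=
        goppaSyndrome_normAddTrace_zero pow_pow_eq_self
    _ = 0 := by simp [s_one, s_half, s_half_succ]

/-- Paper's Lemma 7: over `F = GF(2^(2l))`, `t = 2^l`,
`L₅ = L₄ \ {0} = {α : α ≠ 0 ∧ α^t + α^(t-1) + 1 ≠ 0}`, a finite `S ⊆ L₅` is a codeword
of `Γ(L₄, X^t + X^(t-1) + 1)` iff it is a codeword of `Γ(L₅, X^(t+1) + X^t + X)`. -/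
theorem stmt_8 (l : ℕ) (hl : 1 ≤ l) (t : ℕ) (ht : t = 2 ^ l)
    (S : Finset (GaloisField 2 (2 * l)))
    (hS : ∀ α ∈ S, α ≠ 0 ∧ α ^ t + α ^ (t - 1) + 1 ≠ 0) :
    (∀ j < t, ∑ α ∈ S, α ^ j * (α ^ t + α ^ (t - 1) + 1)⁻¹ = 0) ↔
      (∀ j < t + 1, ∑ α ∈ S, α ^ j * (α ^ (t + 1) + α ^ t + α)⁻¹ = 0) := by
  subst ht
  exact stmt_8_general hl (fun α _ ↦ galoisField_pow_card 2 (2 * l) α) hS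
end

section
/- Let l ≥ 1, F = GF(2^{2l}), and t = 2^l. Let C, A, β ∈ F with C^t = C, and set V = A^t + C·β. Then in F[X] one has the polynomial identity (C·X^{t+1} + A^t·X^t + A·X).comp(X + β) = C·X^{t+1} + V·X^t + V^t·X + (C·β^{t+1} + A^t·β^t + A·β); in particular the coefficient of X equals A + C·β^t = (A^t + C·β)^t. (Polynomial identity underlying the paper's Lemma 8: Γ(L₅,G₅) ≡ Γ(L₆,G₆) with G₆(x) = Rx^{t+1} + V^t x^t + V x + 1.) -/
open Polynomial

/-!
In characteristic `p` with `t = p ^ l`, the map `x ↦ x ^ t` is additive, so translating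
`c X^(t+1) + b X^t + a X` by `β` changes only the coefficients of `X ^ t` and `X`, to `b + c β` and
`a + c β ^ t`, and the constant term. When `b = a ^ t`, the map fixes `c` and its square fixes `a`,
so it carries the first of these two coefficients to the second.
-/

theorem pow_pow_eq_self_of_natCard_eq_sq {K : Type*} [Field K] [Finite K] {q : ℕ}
    (hcard : Nat.card K = q ^ 2) (a : K) : (a ^ q) ^ q = a := by
  have := Fintype.ofFinite K
  rw [← pow_mul, ← sq, ← hcard, Nat.card_eq_fintype_card, FiniteField.pow_card]

theorem galoisField_pow_pow_eq_self (p : ℕ) [Fact p.Prime] {l : ℕ} (hl : l ≠ 0)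
    (a : GaloisField p (2 * l)) : (a ^ p ^ l) ^ p ^ l = a :=
  pow_pow_eq_self_of_natCard_eq_sq
    (by rw [GaloisField.card p (2 * l) (mul_ne_zero two_ne_zero hl), pow_mul']) a

section ExpChar

variable {R : Type*} [CommSemiring R] (p l : ℕ) [ExpChar R p]

theorem pow_add_mul_pow_expChar_pow_s10 {a c : R} (ha : (a ^ p ^ l) ^ p ^ l = a)
    (hc : c ^ p ^ l = c) (β : R) : (a ^ p ^ l + c * β) ^ p ^ l = a + c * β ^ p ^ l := by
  rw [add_pow_expChar_pow, ha, mul_pow, hc]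

theorem comp_X_add_C_of_expChar_pow (a b c β : R) :
    (C c * X ^ (p ^ l + 1) + C b * X ^ p ^ l + C a * X).comp (X + C β)
      = C c * X ^ (p ^ l + 1) + C (b + c * β) * X ^ p ^ l + C (a + c * β ^ p ^ l) * X
        + C (c * β ^ (p ^ l + 1) + b * β ^ p ^ l + a * β) := by
  have translate_pow : (X + C β) ^ p ^ l = X ^ p ^ l + C β ^ p ^ l :=
    add_pow_expChar_pow _ _ p l
  simp only [add_comp, mul_comp, C_comp, pow_comp, X_comp, pow_succ, translate_pow,
    map_add, map_mul, map_pow]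
  ring

theorem stmt_10_general {t : ℕ} (ht : t = p ^ l) {C A β : R} (hC : C ^ t = C)
    (hA : (A ^ t) ^ t = A) {V : R} (hV : V = A ^ t + C * β) :
    (Polynomial.C C * X ^ (t + 1) + Polynomial.C (A ^ t) * X ^ t
        + Polynomial.C A * X).comp (X + Polynomial.C β)
      = Polynomial.C C * X ^ (t + 1) + Polynomial.C V * X ^ t + Polynomial.C (V ^ t) * X
        + Polynomial.C (C * β ^ (t + 1) + A ^ t * β ^ t + A * β)
    ∧ A + C * β ^ t = (A ^ t + C * β) ^ t := by
  subst ht hV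
  have conj_coeff := pow_add_mul_pow_expChar_pow_s10 p l hA hC β
  refine ⟨?_, conj_coeff.symm⟩
  rw [conj_coeff]
  exact comp_X_add_C_of_expChar_pow p l A (A ^ p ^ l) C β

end ExpChar

/-- Polynomial identity underlying the paper's Lemma 8: over `F = GF(2^(2l))`, `t = 2^l`,
`C^t = C`, `V = A^t + C β`, one has
`(C X^(t+1) + A^t X^t + A X) ∘ (X + β) = C X^(t+1) + V X^t + V^t X + (C β^(t+1) + A^t β^t + A β)`,
and in particular the coefficient of `X` satisfies `A + C β^t = (A^t + C β)^t`. -/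
theorem stmt_10 (l : ℕ) (hl : 1 ≤ l) (t : ℕ) (ht : t = 2 ^ l)
    (C A β : GaloisField 2 (2 * l)) (hC : C ^ t = C)
    (V : GaloisField 2 (2 * l)) (hV : V = A ^ t + C * β) :
    (Polynomial.C C * X ^ (t + 1) + Polynomial.C (A ^ t) * X ^ t
        + Polynomial.C A * X).comp (X + Polynomial.C β)
      = Polynomial.C C * X ^ (t + 1) + Polynomial.C V * X ^ t + Polynomial.C (V ^ t) * X
        + Polynomial.C (C * β ^ (t + 1) + A ^ t * β ^ t + A * β)
    ∧ A + C * β ^ t = (A ^ t + C * β) ^ t := by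
  have hA : (A ^ t) ^ t = A := ht ▸ galoisField_pow_pow_eq_self 2 (Nat.one_le_iff_ne_zero.mp hl) A
  exact stmt_10_general 2 l ht hC hA hV
end

section
/- Let l ≥ 1, F = GF(2^{2l}), and t = 2^l. Let R, V ∈ F with R ≠ 0 and R^t = R (i.e., R ∈ GF(2^l)). Then in F[X] one has the polynomial identity (R·X^{t+1} + V^t·X^t + V·X + 1).comp(X + V^t·R⁻¹) = R·X^{t+1} + (1 + V^{t+1}·R⁻¹); that is, substituting x ↦ x + V^t/R into G₆(x) = Rx^{t+1} + V^t x^t + Vx + 1 yields a binomial of the form Rx^{t+1} + const. (Polynomial identity underlying the paper's Lemma 9: Γ(L₆,G₆) ≡ Γ(L₇,G₇) with G₇(x) = Bx^{t+1} + 1.) -/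
open Polynomial

/-!
When `a ^ t = b` and `R ^ t = R`, the Frobenius map `y ↦ y ^ t` carries the factor `x + a / R` to
`x ^ t + b / R`, so completing the product gives
`R x ^ (t + 1) + a x ^ t + b x + w = R (x + a / R) ^ (t + 1) + (w - a b / R)`.
In `GF(2 ^ (2 * l))` this applies to `a = V ^ t` and `b = V`, because `y ↦ y ^ t` is an involution.
-/

theorem pow_pow_eq_self_of_card_eq_sq {K : Type*} [Field K] [Finite K] {q : ℕ}
    (hK : Nat.card K = q ^ 2) (x : K) : (x ^ q) ^ q = x := by
  have := Fintype.ofFinite K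
  rw [← pow_mul, ← sq, ← hK, Nat.card_eq_fintype_card, FiniteField.pow_card]

theorem galoisField_two_mul_pow_pow_eq_self (p : ℕ) [Fact p.Prime] {l : ℕ} (hl : l ≠ 0)
    (x : GaloisField p (2 * l)) : (x ^ p ^ l) ^ p ^ l = x := by
  refine pow_pow_eq_self_of_card_eq_sq ?_ x
  rw [GaloisField.card p (2 * l) (mul_ne_zero two_ne_zero hl), pow_mul']

theorem complete_product {A : Type*} [CommRing A] {r s : A} (hrs : r * s = 1) (a b w x y : A) :
    r * ((y - b * s) * (x - a * s)) + a * (y - b * s) + b * (x - a * s) + w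
      = r * (y * x) + (w - a * b * s) := by
  linear_combination (a * b * s - a * y - b * x) * hrs

theorem stmt_11_general {K : Type*} [CommRing K] (p : ℕ) [ExpChar K p] (n : ℕ) (R : Kˣ)
    (hR : (R : K) ^ p ^ n = R) {a b : K} (hab : a ^ p ^ n = b) (w : K) :
    (C (R : K) * X ^ (p ^ n + 1) + C a * X ^ p ^ n + C b * X + C w).comp
        (X - C (a * (↑R⁻¹ : K)))
      = C (R : K) * X ^ (p ^ n + 1) + C (w - a * b * (↑R⁻¹ : K)) := by
  have inv_pow_eq : (↑R⁻¹ : K) ^ p ^ n = ↑R⁻¹ := by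
    have pow_eq : R ^ p ^ n = R := Units.ext hR
    rw [← Units.val_pow_eq_pow_val, inv_pow, pow_eq]
  have shift_pow : (X - C (a * (↑R⁻¹ : K))) ^ p ^ n = X ^ p ^ n - C (b * (↑R⁻¹ : K)) := by
    rw [sub_pow_expChar_pow, ← C_pow, mul_pow, hab, inv_pow_eq]
  have C_mul_C_inv : C (R : K) * C (↑R⁻¹ : K) = 1 := by rw [← C_mul, R.mul_inv, C_1]
  simp only [add_comp, mul_comp, C_comp, pow_comp, X_comp, pow_succ, shift_pow]
  simp only [C_mul, C_sub]
  exact complete_product C_mul_C_inv ..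

/-- Polynomial identity underlying the paper's Lemma 9: over `F = GF(2^(2l))`, `t = 2^l`,
`R ≠ 0`, `R^t = R`, substituting `x ↦ x + V^t/R` into `G₆(x) = R x^(t+1) + V^t x^t + V x + 1`
gives `R x^(t+1) + (1 + V^(t+1)/R)`. -/
theorem stmt_11 (l : ℕ) (hl : 1 ≤ l) (t : ℕ) (ht : t = 2 ^ l)
    (R V : GaloisField 2 (2 * l)) (hR : R ≠ 0) (hRt : R ^ t = R) :
    (Polynomial.C R * X ^ (t + 1) + Polynomial.C (V ^ t) * X ^ t
        + Polynomial.C V * X + 1).comp (X + Polynomial.C (V ^ t * R⁻¹))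
      = Polynomial.C R * X ^ (t + 1) + Polynomial.C (1 + V ^ (t + 1) * R⁻¹) := by
  subst ht
  simpa [CharTwo.sub_eq_add, pow_succ] using stmt_11_general 2 l (Units.mk0 R hR) hRt
    (galoisField_two_mul_pow_pow_eq_self 2 (Nat.one_le_iff_ne_zero.mp hl) V) 1
end

section
/- Let l ≥ 2, F = GF(2^{2l}), t = 2^l, and L₇ = {α ∈ F : α^{t+1} ≠ 1}. Then the binary Goppa code Γ(L₇, X^{t+1} + 1) has a codeword of cardinality exactly 2t + 3 = 2^{l+1} + 3. (Constructive part of the paper's Lemma 10: for A ∈ F with A^{2^l+1} ≠ 1 and B = A⁻¹, the set {A·ζ : ζ^{t+1} = 1} ∪ {B·ζ : ζ^{t+1} = 1} ∪ {0} of 2(t+1)+1 elements is such a codeword.) -/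
open Finset

/-!
For `c = A ^ n`, the codeword is the preimage of `{0, c, c⁻¹}` under `α ↦ α ^ n`. The denominator
`α ^ n + 1` is constant on each fibre, and the power sums `∑ α ^ j` over a fibre `A μₙ` vanish for
`0 < j < n`, because multiplication by a primitive `n`-th root of unity permutes the fibre. For
`j = 0` the nonzero fibres have odd size `n`, so in characteristic two the sum is
`1 + 1 / (c + 1) + 1 / (c⁻¹ + 1) = 1 + 1 = 0`. In `GF(2^(2l))` the order of the unit
group is `(2^l + 1) (2^l - 1)`, which provides the roots of unity for `n = 2^l + 1` and, when
`l ≥ 2`, an `A` with `A ^ n ≠ 1`.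
-/

open Polynomial (nthRootsFinset mem_nthRootsFinset nthRootsFinset_def
  ne_zero_of_mem_nthRootsFinset)

theorem exists_isPrimitiveRoot_of_dvd_card_units {M : Type*} [CommMonoid M] [IsCyclic Mˣ]
    [Finite Mˣ] {n : ℕ} (hn : n ∣ Nat.card Mˣ) : ∃ ζ : M, IsPrimitiveRoot ζ n := by
  obtain ⟨g, hg⟩ := IsCyclic.exists_ofOrder_eq_natCard (α := Mˣ)
  obtain ⟨k, hk⟩ := hn
  have hgn : IsPrimitiveRoot (g ^ k) n :=
    (IsPrimitiveRoot.orderOf g).pow (orderOf_pos g) (by rw [hg, hk, mul_comm])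
  exact ⟨_, IsPrimitiveRoot.coe_units_iff.mpr hgn⟩

section NthRootFibres

variable {R : Type*} [CommRing R] [IsDomain R] {n : ℕ} {ζ : R}

theorem card_nthRootsFinset_pow (hζ : IsPrimitiveRoot ζ n) {a : R} (ha : a ≠ 0) :
    #(nthRootsFinset n (a ^ n)) = n := by
  classical
  rw [nthRootsFinset_def, Multiset.toFinset_card_of_nodup (hζ.nthRoots_nodup (pow_ne_zero n ha)),
    hζ.card_nthRoots, if_pos ⟨a, rfl⟩]

theorem sum_nthRootsFinset_pow_eq_zero (hζ : IsPrimitiveRoot ζ n) (c : R) {j : ℕ} (hj : ¬n ∣ j) :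
    ∑ x ∈ nthRootsFinset n c, x ^ j = 0 := by
  obtain rfl | hn := n.eq_zero_or_pos
  · simp
  have rotate : ∑ x ∈ nthRootsFinset n c, x ^ j = ∑ x ∈ nthRootsFinset n c, (ζ * x) ^ j := by
    refine (sum_equiv (hζ.isUnit hn.ne').unit.mulLeft (fun x ↦ ?_) fun x _ ↦ rfl).symm
    simp [mem_nthRootsFinset hn, mul_pow, hζ.pow_eq_one]
  simp only [mul_pow, ← mul_sum] at rotate
  exact (mul_left_eq_self₀.mp rotate.symm).resolve_left fun h ↦ hj (hζ.dvd_of_pow_eq_one j h)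

theorem sum_nthRootsFinset_pow_mul (h : R → R) (c : R) (j : ℕ) :
    ∑ x ∈ nthRootsFinset n c, x ^ j * h (x ^ n) = (∑ x ∈ nthRootsFinset n c, x ^ j) * h c := by
  obtain rfl | hn := n.eq_zero_or_pos
  · simp
  rw [sum_mul]
  exact sum_congr rfl fun x hx ↦ by rw [(mem_nthRootsFinset hn c).mp hx]

theorem disjoint_nthRootsFinset {c d : R} (hcd : c ≠ d) :
    Disjoint (nthRootsFinset n c) (nthRootsFinset n d) := by
  obtain rfl | hn := n.eq_zero_or_pos
  · simp
  rw [disjoint_left]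
  intro x hxc hxd
  rw [mem_nthRootsFinset hn] at hxc hxd
  exact hcd (hxc.symm.trans hxd)

theorem natCast_eq_one_of_isPrimitiveRoot_of_charTwo [CharP R 2] (hζ : IsPrimitiveRoot ζ n)
    (hn : n ≠ 0) : (n : R) = 1 :=
  have : NeZero n := ⟨hn⟩
  (CharTwo.natCast_cases R n).resolve_left hζ.neZero'.ne

end NthRootFibres

section PairedCosets

variable {F : Type*} [Field F] {n : ℕ} {ζ A : F}

theorem inv_add_one_add_inv_inv_add_one {c : F} (hc : c ≠ 0) (hc1 : c + 1 ≠ 0) :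
    (c + 1)⁻¹ + (c⁻¹ + 1)⁻¹ = 1 := by
  have common_denom : c⁻¹ + 1 = (c + 1) / c := by
    rw [add_div, div_self hc, one_div, add_comm]
  rw [common_denom, inv_div, ← one_div, ← add_div, add_comm 1 c, div_self hc1]

theorem ne_inv_self_of_charTwo [CharP F 2] {c : F} (hc : c ≠ 0) (hc1 : c ≠ 1) : c ≠ c⁻¹ := by
  simp [self_eq_inv₀, CharTwo.neg_eq, hc, hc1]

theorem disjoint_nthRootsFinset_pow_inv_pow [CharP F 2] (hA : A ≠ 0) (hAn : A ^ n ≠ 1) :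
    Disjoint (nthRootsFinset n (A ^ n)) (nthRootsFinset n (A⁻¹ ^ n)) :=
  disjoint_nthRootsFinset (inv_pow A n ▸ ne_inv_self_of_charTwo (pow_ne_zero n hA) hAn)

variable [DecidableEq F]

/-- The set `A μₙ ∪ A⁻¹ μₙ ∪ {0}`, the support of the codeword; a coset `a μₙ` is encoded as the
set of roots of `X ^ n = a ^ n`. -/
noncomputable def pairedCosets (n : ℕ) (A : F) : Finset F :=
  insert 0 (nthRootsFinset n (A ^ n) ∪ nthRootsFinset n (A⁻¹ ^ n))

theorem mem_pairedCosets (hn : 0 < n) {α : F} :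
    α ∈ pairedCosets n A ↔ α = 0 ∨ α ^ n = A ^ n ∨ α ^ n = A⁻¹ ^ n := by
  simp [pairedCosets, mem_nthRootsFinset hn]

theorem pow_ne_one_of_mem_pairedCosets (hAn : A ^ n ≠ 1) {α : F}
    (hα : α ∈ pairedCosets n A) : α ^ n ≠ 1 := by
  have hn : n ≠ 0 := fun h ↦ hAn (by rw [h, pow_zero])
  obtain rfl | h | h := (mem_pairedCosets (Nat.pos_of_ne_zero hn)).mp hα
  · simp [hn]
  · rwa [h]
  · rwa [h, inv_pow, inv_ne_one]

theorem zero_notMem_nthRootsFinset_pow_union (hA : A ≠ 0) :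
    0 ∉ nthRootsFinset n (A ^ n) ∪ nthRootsFinset n (A⁻¹ ^ n) := by
  have zero_notMem {a : F} (ha : a ≠ 0) : 0 ∉ nthRootsFinset n (a ^ n) := fun h ↦
    ne_zero_of_mem_nthRootsFinset (pow_ne_zero n ha) h rfl
  exact notMem_union.mpr ⟨zero_notMem hA, zero_notMem (inv_ne_zero hA)⟩

variable [CharP F 2]

theorem card_pairedCosets (hζ : IsPrimitiveRoot ζ n) (hA : A ≠ 0) (hAn : A ^ n ≠ 1) :
    #(pairedCosets n A) = 2 * n + 1 := by
  rw [pairedCosets, card_insert_of_notMem (zero_notMem_nthRootsFinset_pow_union hA),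
    card_union_of_disjoint (disjoint_nthRootsFinset_pow_inv_pow hA hAn),
    card_nthRootsFinset_pow hζ hA, card_nthRootsFinset_pow hζ (inv_ne_zero hA), two_mul]

theorem sum_pairedCosets_pow_mul (hA : A ≠ 0) (hAn : A ^ n ≠ 1) (h : F → F) (j : ℕ) :
    ∑ α ∈ pairedCosets n A, α ^ j * h (α ^ n) =
      0 ^ j * h (0 ^ n) + ((∑ α ∈ nthRootsFinset n (A ^ n), α ^ j) * h (A ^ n) +
        (∑ α ∈ nthRootsFinset n (A⁻¹ ^ n), α ^ j) * h (A⁻¹ ^ n)) := by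
  rw [pairedCosets, sum_insert (zero_notMem_nthRootsFinset_pow_union hA),
    sum_union (disjoint_nthRootsFinset_pow_inv_pow hA hAn), sum_nthRootsFinset_pow_mul,
    sum_nthRootsFinset_pow_mul]

theorem sum_pairedCosets_pow_mul_inv_eq_zero (hζ : IsPrimitiveRoot ζ n) (hA : A ≠ 0)
    (hAn : A ^ n ≠ 1) {j : ℕ} (hj : j < n) :
    ∑ α ∈ pairedCosets n A, α ^ j * (α ^ n + 1)⁻¹ = 0 := by
  rw [sum_pairedCosets_pow_mul hA hAn fun c ↦ (c + 1)⁻¹]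
  obtain rfl | hj0 := j.eq_zero_or_pos
  · have fibre_sum {a : F} (ha : a ≠ 0) : ∑ α ∈ nthRootsFinset n (a ^ n), α ^ 0 = 1 := by
      simp only [pow_zero, sum_const, card_nthRootsFinset_pow hζ ha, nsmul_one,
        natCast_eq_one_of_isPrimitiveRoot_of_charTwo hζ hj.ne']
    have hc : A ^ n + 1 ≠ 0 := by rwa [Ne, CharTwo.add_eq_zero]
    rw [fibre_sum hA, fibre_sum (inv_ne_zero hA), inv_pow, one_mul, one_mul,
      inv_add_one_add_inv_inv_add_one (pow_ne_zero n hA) hc, zero_pow hj.ne', pow_zero, zero_add,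
      inv_one, one_mul, CharTwo.add_self_eq_zero]
  · have hnj : ¬n ∣ j := Nat.not_dvd_of_pos_of_lt hj0 hj
    simp only [zero_pow hj0.ne', sum_nthRootsFinset_pow_eq_zero hζ _ hnj, zero_mul, add_zero]

end PairedCosets

section QuadraticGaloisField

variable (p : ℕ) [Fact p.Prime] {l : ℕ}

theorem card_units_galoisField_two_mul (hl : l ≠ 0) :
    Nat.card (GaloisField p (2 * l))ˣ = (p ^ l + 1) * (p ^ l - 1) := by
  rw [Nat.card_units, GaloisField.card p (2 * l) (by lia), mul_comm 2 l, pow_mul]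
  exact Nat.sq_sub_sq _ 1

theorem exists_isPrimitiveRoot_galoisField_two_mul (hl : l ≠ 0) :
    ∃ ζ : GaloisField p (2 * l), IsPrimitiveRoot ζ (p ^ l + 1) :=
  exists_isPrimitiveRoot_of_dvd_card_units <|
    card_units_galoisField_two_mul p hl ▸ dvd_mul_right _ _

theorem exists_unit_pow_ne_one_galoisField_two_mul (hpl : 2 < p ^ l) :
    ∃ A : (GaloisField p (2 * l))ˣ, A ^ (p ^ l + 1) ≠ 1 := by
  have hl : l ≠ 0 := by
    rintro rfl
    simp at hpl
  refine exists_pow_ne_one_of_isCyclic (Nat.succ_ne_zero _) ?_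
  rw [card_units_galoisField_two_mul p hl]
  exact lt_mul_of_one_lt_right (Nat.succ_pos _) (by lia)

end QuadraticGaloisField

theorem stmt_14_general {F : Type*} [Field F] [CharP F 2] {n : ℕ} {ζ A : F}
    (hζ : IsPrimitiveRoot ζ n) (hA : A ≠ 0) (hAn : A ^ n ≠ 1) :
    ∃ S : Finset F,
      (∀ α ∈ S, α ^ n ≠ 1) ∧
      #S = 2 * n + 1 ∧
      (∀ j < n, ∑ α ∈ S, α ^ j * (α ^ n + 1)⁻¹ = 0) := by
  classical
  exact ⟨pairedCosets n A, fun _ ↦ pow_ne_one_of_mem_pairedCosets hAn,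
    card_pairedCosets hζ hA hAn, fun _ ↦ sum_pairedCosets_pow_mul_inv_eq_zero hζ hA hAn⟩

/-- Constructive part of the paper's Lemma 10: for `l ≥ 2`, `F = GF(2^(2l))`, `t = 2^l`,
`L₇ = {α : α^(t+1) ≠ 1}`, the binary Goppa code `Γ(L₇, X^(t+1) + 1)` has a codeword of
cardinality exactly `2t + 3`. -/
theorem stmt_14 (l : ℕ) (hl : 2 ≤ l) (t : ℕ) (ht : t = 2 ^ l) :
    ∃ S : Finset (GaloisField 2 (2 * l)),
      (∀ α ∈ S, α ^ (t + 1) ≠ 1) ∧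
      S.card = 2 * t + 3 ∧
      (∀ j < t + 1, ∑ α ∈ S, α ^ j * (α ^ (t + 1) + 1)⁻¹ = 0) := by
  subst ht
  have two_lt : 2 < 2 ^ l := lt_self_pow₀ one_lt_two hl
  obtain ⟨ζ, hζ⟩ := exists_isPrimitiveRoot_galoisField_two_mul 2 (l := l) (by lia)
  obtain ⟨A, hA⟩ := exists_unit_pow_ne_one_galoisField_two_mul 2 two_lt
  exact stmt_14_general hζ A.ne_zero (by rwa [← Units.val_pow_eq_pow_val, Ne, Units.val_eq_one])
end

section
/- Let l ≥ 2, F = GF(2^{2l}), t = 2^l, and L₂ = {α ∈ F : α^t ≠ α}. Then every codeword of the binary Goppa code Γ(L₂, X^t + X) has even cardinality, and every nonempty codeword S satisfies |S| ≥ 2(t+1) + 2 = 2t + 4. (Paper's Lemma 11: the minimal distance of Γ(L₂,G₂) ≡ Γ(L₃,G₃) equals the minimal even weight of a codeword of Γ(L₅,G₅) ≡ Γ(L₆,G₆) ≡ Γ(L₇,G₇), hence d ≥ 2(t+1)+2.) -/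
open Finset

/-!
Let `P = ∏ α ∈ S, (X - α)` be the locator polynomial of a codeword `S` of `Γ(L, G)`. In any
`K`-algebra where `G` has a root `x`, `(α - x)⁻¹ = H(α) / G(α)` with `H = G / (X - x)` of degree
less than `deg G`, so the parity checks give `∑ (x - α)⁻¹ = 0`, that is `P'(x) = 0`. Taking
`x` to be the class of `X` in `K[X] / (G)` shows `G ∣ P'`. In characteristic two `P'' = 0`, hence
`G² ∣ P'` as soon as `G` is separable.

For `G = X ^ t + X` and `α ^ (t ^ 2) = α`, the value `G(α) = α ^ t + α` is the trace of `α` and is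
fixed by `x ↦ x ^ t`, so the parity checks also hold for the conjugates `α ^ t`. Combining both
families yields `∑ 1 = 0` and `∑ α = 0`. Thus `P` has even degree and no subleading term, which in
characteristic two forces `deg P' ≤ |S| - 4`, and so `2 t ≤ |S| - 4`.
-/

open Polynomial Lagrange

section CharTwo

variable {R : Type*} [CommRing R] [CharP R 2]

lemma derivative_derivative_eq_zero_of_charTwo (P : R[X]) : derivative (derivative P) = 0 := by
  have h : derivative^[2] P = (Nat.factorial 2 • hasseDeriv 2 : R[X] →ₗ[R] R[X]) P :=
    congrFun (factorial_smul_hasseDeriv 2).symm P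
  simpa [CharTwo.two_eq_zero] using h

lemma even_natDegree_derivative_of_charTwo (P : R[X]) : Even (derivative P).natDegree := by
  by_contra hodd
  have hcast : (((derivative P).natDegree + 1 : ℕ) : R) = 0 :=
    (CharP.cast_eq_zero_iff R 2 _).2 (Nat.not_even_iff_odd.1 hodd).add_one.two_dvd
  have hlead : (derivative P).leadingCoeff = 0 := by
    rw [leadingCoeff, coeff_derivative, ← Nat.cast_add_one, hcast, mul_zero]
  simp [leadingCoeff_eq_zero.1 hlead] at hodd

lemma natDegree_derivative_add_four_le_of_charTwo {P : R[X]} (heven : Even P.natDegree)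
    (hnext : P.nextCoeff = 0) (hP : derivative P ≠ 0) :
    (derivative P).natDegree + 4 ≤ P.natDegree := by
  have hcoeff : P.coeff ((derivative P).natDegree + 1) ≠ 0 := fun h =>
    leadingCoeff_ne_zero.2 hP (by rw [leadingCoeff, coeff_derivative, h, zero_mul])
  have hle : (derivative P).natDegree + 1 ≤ P.natDegree := le_natDegree_of_ne_zero hcoeff
  have hne : P.natDegree ≠ (derivative P).natDegree + 2 := fun h => by
    rw [nextCoeff_of_natDegree_pos (by omega), h] at hnext
    exact hcoeff hnext
  obtain ⟨m, hm⟩ := heven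
  obtain ⟨k, hk⟩ := even_natDegree_derivative_of_charTwo P
  omega

lemma sq_dvd_derivative_of_separable_of_charTwo {G P : R[X]} (hG : G.Separable)
    (hdvd : G ∣ derivative P) : G ^ 2 ∣ derivative P := by
  obtain ⟨H, hH⟩ := hdvd
  have hleibniz : derivative G * H + G * derivative H = 0 := by
    rw [← derivative_mul, ← hH, derivative_derivative_eq_zero_of_charTwo]
  have hGH : G ∣ derivative G * H :=
    ⟨-derivative H, by linear_combination hleibniz⟩
  rw [hH, sq]
  exact mul_dvd_mul_left G (IsCoprime.dvd_of_dvd_mul_left hG hGH)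

lemma separable_X_pow_add_X_of_charTwo {n : ℕ} (hn : Even n) : (X ^ n + X : R[X]).Separable := by
  rw [← CharTwo.sub_eq_add]
  exact galois_poly_separable 2 n hn.two_dvd

end CharTwo

section Nodal

variable {ι R : Type*} [CommRing R] {s : Finset ι} {v : ι → R}

lemma nextCoeff_nodal (s : Finset ι) (v : ι → R) : (nodal s v).nextCoeff = -∑ i ∈ s, v i :=
  prod_X_sub_C_nextCoeff v

lemma derivative_nodal_ne_zero [IsDomain R] (hv : Set.InjOn v s) (hs : s.Nonempty) :
    derivative (nodal s v) ≠ 0 := by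
  classical
  obtain ⟨i, hi⟩ := hs
  intro hzero
  have heval := eval_nodal_derivative_eval_node_eq (v := v) hi
  rw [hzero, eval_zero] at heval
  refine eval_nodal_not_at_node (fun j hj hij => ?_) heval.symm
  exact ne_of_mem_erase hj (hv (mem_of_mem_erase hj) hi hij.symm)

end Nodal

lemma natDegree_X_pow_add_X {R : Type*} [Semiring R] [Nontrivial R] {n : ℕ} (hn : 1 < n) :
    (X ^ n + X : R[X]).natDegree = n := by
  rw [natDegree_add_eq_left_of_natDegree_lt] <;> simp [hn]

lemma sub_mul_eval_divByMonic_mul_inv_eq_one {K A : Type*} [Field K] [CommRing A] [Algebra K A]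
    {G : K[X]} {x : A} (hx : aeval x G = 0) {α : K} (hα : G.eval α ≠ 0) :
    (algebraMap K A α - x) * (eval (algebraMap K A α) (G.map (algebraMap K A) /ₘ (X - C x)) *
      algebraMap K A (G.eval α)⁻¹) = 1 := by
  have hfactor : (X - C x) * (G.map (algebraMap K A) /ₘ (X - C x)) = G.map (algebraMap K A) :=
    mul_divByMonic_eq_iff_isRoot.2 (by rwa [IsRoot, eval_map_algebraMap])
  have heval := congrArg (eval (algebraMap K A α)) hfactor
  rw [eval_mul, eval_sub, eval_X, eval_C, eval_map_apply] at heval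
  rw [← mul_assoc, heval, ← map_mul, mul_inv_cancel₀ hα, map_one]

/-- The finite set `S`, identified with its indicator vector, is a codeword of the binary Goppa
code `Γ(L, G)`. The location set `L ⊇ S` enters only through the requirement that `G` does not
vanish on `S`. -/
structure IsGoppaCodeword_s17 {K : Type*} [Field K] (G : K[X]) (S : Finset K) : Prop where
  eval_ne_zero : ∀ α ∈ S, G.eval α ≠ 0
  parityCheck : ∀ j < G.natDegree, ∑ α ∈ S, α ^ j * (G.eval α)⁻¹ = 0

namespace IsGoppaCodeword_s17

variable {K : Type*} [Field K] {G : K[X]} {S : Finset K}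

section Algebra

variable {A : Type*} [CommRing A] [Algebra K A]

lemma sum_eval_mul_inv_eq_zero (h : IsGoppaCodeword_s17 G S) {Q : A[X]} (hQ : Q.degree < G.degree) :
    ∑ α ∈ S, Q.eval (algebraMap K A α) * algebraMap K A (G.eval α)⁻¹ = 0 := by
  simp only [eval_eq_sum (p := Q), sum_def, sum_mul]
  rw [sum_comm]
  refine sum_eq_zero fun j hj => ?_
  have hjG : j < G.natDegree :=
    WithBot.coe_lt_coe.1 (((le_degree_of_mem_supp j hj).trans_lt hQ).trans_le degree_le_natDegree)
  simp only [mul_assoc, ← mul_sum, ← map_pow, ← map_mul, ← map_sum, h.parityCheck j hjG,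
    map_zero, mul_zero]

lemma aeval_derivative_nodal_eq_zero (h : IsGoppaCodeword_s17 G S) {x : A} (hx : aeval x G = 0) :
    aeval x (derivative (nodal S id)) = 0 := by
  classical
  nontriviality A
  obtain rfl | ⟨α₀, hα₀⟩ := S.eq_empty_or_nonempty
  · simp
  have hG : G ≠ 0 := fun hzero => h.eval_ne_zero α₀ hα₀ (by rw [hzero, eval_zero])
  set H : A[X] := G.map (algebraMap K A) /ₘ (X - C x)
  have hHdeg : H.degree < G.degree := by
    rw [← degree_map G (algebraMap K A)]
    exact degree_divByMonic_lt _ _ (map_ne_zero hG) (by simp [degree_X_sub_C])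
  have hterm (α : K) (hα : α ∈ S) : aeval x (nodal (S.erase α) id) =
      -aeval x (nodal S id) * (H.eval (algebraMap K A α) * algebraMap K A (G.eval α)⁻¹) := by
    have hinv := sub_mul_eval_divByMonic_mul_inv_eq_one hx (h.eval_ne_zero α hα)
    have hsplit := congrArg (aeval x) (nodal_eq_mul_nodal_erase (v := id) hα)
    simp only [map_mul, map_sub, aeval_X, aeval_C, id] at hsplit
    rw [hsplit]
    linear_combination (-aeval x (nodal (S.erase α) id)) * hinv
  rw [derivative_nodal, map_sum, sum_congr rfl hterm, ← mul_sum,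
    h.sum_eval_mul_inv_eq_zero hHdeg, mul_zero]

end Algebra

theorem dvd_derivative_nodal (h : IsGoppaCodeword_s17 G S) : G ∣ derivative (nodal S id) := by
  rw [← AdjoinRoot.mk_eq_zero, ← AdjoinRoot.aeval_eq]
  exact h.aeval_derivative_nodal_eq_zero (by rw [AdjoinRoot.aeval_eq, AdjoinRoot.mk_self])

theorem two_mul_natDegree_add_four_le_card [CharP K 2] (h : IsGoppaCodeword_s17 G S)
    (hG : G.Separable) (hS : S.Nonempty) (heven : Even #S) (hsum : ∑ α ∈ S, α = 0) :
    2 * G.natDegree + 4 ≤ #S := by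
  have hne := derivative_nodal_ne_zero Function.injective_id.injOn hS
  have hsq := sq_dvd_derivative_of_separable_of_charTwo hG h.dvd_derivative_nodal
  calc 2 * G.natDegree + 4 = (G ^ 2).natDegree + 4 := by rw [natDegree_pow]
    _ ≤ (derivative (nodal S id)).natDegree + 4 := by gcongr; exact natDegree_le_of_dvd hsq hne
    _ ≤ (nodal S id).natDegree := natDegree_derivative_add_four_le_of_charTwo
        (by rwa [natDegree_nodal]) (by simp [nextCoeff_nodal, hsum]) hne
    _ = #S := natDegree_nodal

end IsGoppaCodeword_s17

section TraceGoppaCode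

variable {K : Type*} [Field K] {l : ℕ} {S : Finset K}

lemma sum_eq_zero_of_sum_norm_mul_inv_trace_eq_zero {t : ℕ} (htrace : ∀ α ∈ S, α ^ t + α ≠ 0)
    (hnorm : ∑ α ∈ S, α ^ t * α * (α ^ t + α)⁻¹ = 0)
    (htwo : ∑ α ∈ S, α ^ 2 * (α ^ t + α)⁻¹ = 0) : ∑ α ∈ S, α = 0 := by
  calc ∑ α ∈ S, α
      = ∑ α ∈ S, (α ^ t * α * (α ^ t + α)⁻¹ + α ^ 2 * (α ^ t + α)⁻¹) :=
        sum_congr rfl fun α hα => by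
          have hα' := htrace α hα
          field_simp
    _ = 0 := by rw [sum_add_distrib, hnorm, htwo, add_zero]

variable [CharP K 2]

lemma sum_conj_pow_mul_inv_trace_eq_zero (hconj : ∀ α ∈ S, (α ^ 2 ^ l) ^ 2 ^ l = α) {j : ℕ}
    (hj : ∑ α ∈ S, α ^ j * (α ^ 2 ^ l + α)⁻¹ = 0) :
    ∑ α ∈ S, (α ^ 2 ^ l) ^ j * (α ^ 2 ^ l + α)⁻¹ = 0 := by
  calc ∑ α ∈ S, (α ^ 2 ^ l) ^ j * (α ^ 2 ^ l + α)⁻¹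
      = ∑ α ∈ S, (α ^ j * (α ^ 2 ^ l + α)⁻¹) ^ 2 ^ l := sum_congr rfl fun α hα => by
        rw [mul_pow, inv_pow, add_pow_char_pow, hconj α hα, add_comm α, pow_right_comm]
    _ = (∑ α ∈ S, α ^ j * (α ^ 2 ^ l + α)⁻¹) ^ 2 ^ l := (sum_pow_char_pow 2 l S _).symm
    _ = 0 := by rw [hj, zero_pow (by positivity)]

lemma even_card_of_sum_mul_inv_trace_eq_zero (hconj : ∀ α ∈ S, (α ^ 2 ^ l) ^ 2 ^ l = α)
    (htrace : ∀ α ∈ S, α ^ 2 ^ l + α ≠ 0)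
    (hone : ∑ α ∈ S, α * (α ^ 2 ^ l + α)⁻¹ = 0) : Even #S := by
  have hone' : ∑ α ∈ S, α ^ 2 ^ l * (α ^ 2 ^ l + α)⁻¹ = 0 := by
    simpa using sum_conj_pow_mul_inv_trace_eq_zero hconj (j := 1) (by simpa using hone)
  rw [even_iff_two_dvd, ← CharP.cast_eq_zero_iff K 2]
  calc (#S : K) = ∑ α ∈ S, (α ^ 2 ^ l * (α ^ 2 ^ l + α)⁻¹ + α * (α ^ 2 ^ l + α)⁻¹) := by
        rw [cast_card]
        refine sum_congr rfl fun α hα => ?_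
        rw [← add_mul, mul_inv_cancel₀ (htrace α hα)]
    _ = 0 := by rw [sum_add_distrib, hone', hone, add_zero]

lemma sum_norm_mul_inv_trace_eq_zero {m : ℕ} (hconj : ∀ α ∈ S, (α ^ 2 ^ (m + 1)) ^ 2 ^ (m + 1) = α)
    (htrace : ∀ α ∈ S, α ^ 2 ^ (m + 1) + α ≠ 0)
    (hhalf : ∑ α ∈ S, α ^ (2 ^ m + 1) * (α ^ 2 ^ (m + 1) + α)⁻¹ = 0) :
    ∑ α ∈ S, α ^ 2 ^ (m + 1) * α * (α ^ 2 ^ (m + 1) + α)⁻¹ = 0 := by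
  -- With `t = 2 ^ (m + 1)`, `T = α ^ t + α`: the square of the term `α ^ (t / 2 + 1) / T` is
  -- `α ^ t * α ^ 2 / T ^ 2`, and adding its conjugate gives `α ^ t * α * T / T ^ 2`.
  have hhalf' := sum_conj_pow_mul_inv_trace_eq_zero hconj hhalf
  have hpow (β : K) : (β ^ (2 ^ m + 1)) ^ 2 = β ^ 2 ^ (m + 1) * β ^ 2 := by ring
  calc ∑ α ∈ S, α ^ 2 ^ (m + 1) * α * (α ^ 2 ^ (m + 1) + α)⁻¹
      = ∑ α ∈ S, ((α ^ (2 ^ m + 1) * (α ^ 2 ^ (m + 1) + α)⁻¹) ^ 2 +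
          ((α ^ 2 ^ (m + 1)) ^ (2 ^ m + 1) * (α ^ 2 ^ (m + 1) + α)⁻¹) ^ 2) :=
        sum_congr rfl fun α hα => by
          have hα' := htrace α hα
          rw [mul_pow, mul_pow, hpow, hpow, hconj α hα]
          field_simp
          ring
    _ = 0 := by
        rw [sum_add_distrib, ← CharTwo.sum_sq, ← CharTwo.sum_sq, hhalf, hhalf']
        simp

end TraceGoppaCode

theorem stmt_17_general {K : Type*} [Field K] [CharP K 2] {l : ℕ} (hl : 2 ≤ l) {S : Finset K}
    (hconj : ∀ α ∈ S, (α ^ 2 ^ l) ^ 2 ^ l = α) (hS : ∀ α ∈ S, α ^ 2 ^ l ≠ α)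
    (hcw : ∀ j < 2 ^ l, ∑ α ∈ S, α ^ j * (α ^ 2 ^ l + α)⁻¹ = 0) :
    Even #S ∧ (S.Nonempty → 2 * 2 ^ l + 4 ≤ #S) := by
  obtain ⟨m, rfl⟩ : ∃ m, l = m + 1 := ⟨l - 1, by omega⟩
  have hm : 2 ≤ 2 ^ m := Nat.pow_le_pow_right (n := 2) two_pos (by omega : 1 ≤ m)
  have htrace (α : K) (hα : α ∈ S) : α ^ 2 ^ (m + 1) + α ≠ 0 :=
    fun h => hS α hα (CharTwo.add_eq_zero.1 h)
  have hdeg := natDegree_X_pow_add_X (R := K) (n := 2 ^ (m + 1)) (by omega)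
  have hgoppa : IsGoppaCodeword_s17 (X ^ 2 ^ (m + 1) + X) S :=
    ⟨by simpa using htrace, by simpa [hdeg] using hcw⟩
  have heven := even_card_of_sum_mul_inv_trace_eq_zero hconj htrace
    (by simpa using hcw 1 (by omega))
  have hnorm := sum_norm_mul_inv_trace_eq_zero hconj htrace (hcw (2 ^ m + 1) (by omega))
  have hsum := sum_eq_zero_of_sum_norm_mul_inv_trace_eq_zero htrace hnorm (hcw 2 (by omega))
  refine ⟨heven, fun hne => ?_⟩
  simpa only [hdeg] using hgoppa.two_mul_natDegree_add_four_le_card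
    (separable_X_pow_add_X_of_charTwo (even_two.pow_of_ne_zero m.succ_ne_zero)) hne heven hsum

lemma pow_two_pow_pow_two_pow_galoisField {l : ℕ} (hl : l ≠ 0) (α : GaloisField 2 (2 * l)) :
    (α ^ 2 ^ l) ^ 2 ^ l = α := by
  have : Fintype (GaloisField 2 (2 * l)) := Fintype.ofFinite _
  rw [← pow_mul, ← pow_add, ← two_mul, ← GaloisField.card 2 (2 * l) (by omega),
    Nat.card_eq_fintype_card, FiniteField.pow_card]

/-- Paper's Lemma 11: for `l ≥ 2`, `F = GF(2^(2l))`, `t = 2^l`,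
`L₂ = {α : α^t ≠ α}`, every codeword of the binary Goppa code `Γ(L₂, X^t + X)` has
even cardinality, and every nonempty codeword has cardinality at least
`2(t+1) + 2 = 2t + 4`. -/
theorem stmt_17 (l : ℕ) (hl : 2 ≤ l) (t : ℕ) (ht : t = 2 ^ l)
    (S : Finset (GaloisField 2 (2 * l)))
    (hS : ∀ α ∈ S, α ^ t ≠ α)
    (hcw : ∀ j < t, ∑ α ∈ S, α ^ j * (α ^ t + α)⁻¹ = 0) :
    Even S.card ∧ (S.Nonempty → 2 * t + 4 ≤ S.card) := by
  subst ht
  exact stmt_17_general hl (fun α _ => pow_two_pow_pow_two_pow_galoisField (by omega) α) hS hcw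
end

section
/- Let l ≥ 2, F = GF(2^{2l}), t = 2^l, and L₄ = {α ∈ F : α^t + α^{t−1} + 1 ≠ 0}. The minimum distance of the binary Goppa code Γ(L₄, X^t + X^{t−1} + 1) equals exactly 2(t+1) + 1 = 2t + 3: every nonempty codeword S satisfies |S| ≥ 2t + 3, and there exists a codeword of cardinality exactly 2t + 3. (Paperdef's Lemma 12 for the new codes with Goppa polynomial G₄(x) = A^t x^t + A^{t−1} x^{t−1} + 1, normalized to A = 1; note the design distance 2t+3 exceeds the generic bound 2·deg G₄ + 1 = 2t + 1.) -/
open Finset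

/-!
Let `σ = ∏_{α ∈ S} (X - α)`. A set `S` is a codeword of `Γ(L, G)` exactly when `G ∣ σ'`. Over a
perfect field of characteristic two `σ'` is a square, so for squarefree `G` this is the same as
`G ^ 2 ∣ σ'`.

For `t = 2 ^ l` and `G = X ^ t + X ^ (t - 1) + 1`, the polynomial `X * G = (X + 1) ^ (t + 1) - 1`
is separable and maps `GF(t ^ 2)` to `GF(t)`. Applying the Frobenius map `x ↦ x ^ t` to the parity
checks of `Γ(L, G)` and of `Γ(L, G ^ 2)` therefore yields new ones: `0 ∉ S` and `∑ α⁻¹ = 0`. These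
say `X ∣ σ'`, so `(X * G) ^ 2 ∣ σ'` and `2 * (t + 1) ≤ deg σ' < #S`.

The bound is attained by the roots of `Y * (Y ^ (t + 1) - a) * (Y ^ (t + 1) - a⁻¹)`, `Y = X + 1`,
where `a ≠ 0, 1` is a norm from `GF(t ^ 2)` to `GF(t)`: its derivative is `(Y ^ (t + 1) - 1) ^ 2`.
-/

namespace GoppaCode

open Polynomial Lagrange

section CommRing

variable {R : Type*} [CommRing R]

theorem X_mul_sum_C_mul_nodal_erase [DecidableEq R] (S : Finset R) (c : R → R) :
    X * ∑ α ∈ S, C (c α) * nodal (S.erase α) id =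
      ∑ α ∈ S, C (α * c α) * nodal (S.erase α) id + C (∑ α ∈ S, c α) * nodal S id := by
  rw [map_sum, sum_mul, mul_sum, ← sum_add_distrib]
  refine sum_congr rfl fun α hα => ?_
  rw [nodal_eq_mul_nodal_erase hα, C_mul, id]
  ring

theorem X_pow_mul_sum_C_mul_nodal_erase [DecidableEq R] {S : Finset R} {c : R → R} {k : ℕ}
    (hc : ∀ j < k, ∑ α ∈ S, α ^ j * c α = 0) :
    X ^ k * ∑ α ∈ S, C (c α) * nodal (S.erase α) id =
      ∑ α ∈ S, C (α ^ k * c α) * nodal (S.erase α) id := by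
  induction k with
  | zero => simp
  | succ k ih =>
    rw [pow_succ', mul_assoc, ih fun j hj => hc j (hj.trans k.lt_succ_self),
      X_mul_sum_C_mul_nodal_erase, hc k k.lt_succ_self, C_0, zero_mul, add_zero]
    simp only [pow_succ', mul_assoc]

theorem mul_sum_C_mul_nodal_erase [DecidableEq R] {P : R[X]} {S : Finset R} {c : R → R}
    (hc : ∀ j < P.natDegree, ∑ α ∈ S, α ^ j * c α = 0) :
    P * ∑ α ∈ S, C (c α) * nodal (S.erase α) id =
      ∑ α ∈ S, C (P.eval α * c α) * nodal (S.erase α) id := by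
  have monomial_mul : ∀ k ∈ range (P.natDegree + 1),
      C (P.coeff k) * X ^ k * ∑ α ∈ S, C (c α) * nodal (S.erase α) id =
        ∑ α ∈ S, C (P.coeff k * α ^ k * c α) * nodal (S.erase α) id := fun k hk => by
    rw [mul_assoc, X_pow_mul_sum_C_mul_nodal_erase fun j hj =>
      hc j (hj.trans_le (Nat.lt_succ_iff.mp (mem_range.mp hk))), mul_sum]
    simp only [C_mul, mul_assoc]
  conv_lhs => rw [P.as_sum_range_C_mul_X_pow]
  rw [sum_mul, sum_congr rfl monomial_mul, sum_comm]
  refine sum_congr rfl fun α _ => ?_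
  rw [eval_eq_sum_range, sum_mul, map_sum, sum_mul]

theorem derivative_derivative_eq_zero [CharP R 2] (f : R[X]) : derivative (derivative f) = 0 := by
  have h := iterate_derivative_eq_factorial_smul_sum f 2
  rwa [Nat.factorial_two, CharTwo.two_nsmul] at h

theorem exists_derivative_eq_sq [NoZeroDivisors R] [CharP R 2] [PerfectRing R 2] (f : R[X]) :
    ∃ r : R[X], derivative f = r ^ 2 := by
  refine ⟨(contract 2 (derivative f)).map ((frobeniusEquiv R 2).symm : R →+* R), ?_⟩
  rw [← polynomial_expand_eq, expand_contract 2 (derivative_derivative_eq_zero f) two_ne_zero]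

theorem separable_comp_X_add_C {P : R[X]} (hP : P.Separable) (a : R) :
    (P.comp (X + C a)).Separable := by
  simpa [Separable, derivative_comp] using IsCoprime.map hP (compRingHom (X + C a))

end CommRing

section Codeword

variable {K : Type*} [Field K]

theorem eval_derivative_nodal_ne_zero {S : Finset K} {α : K} (hα : α ∈ S) :
    (derivative (nodal S id)).eval α ≠ 0 := by
  classical
  have h := eval_nodal_derivative_eval_node_eq (v := id) hα
  rw [id] at h
  rw [h]
  exact eval_nodal_not_at_node fun β hβ => (ne_of_mem_erase hβ).symm

theorem sum_eval_div_eval_derivative_nodal {S : Finset K} {P : K[X]}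
    (hP : P.natDegree + 1 < #S) :
    ∑ α ∈ S, P.eval α / (derivative (nodal S id)).eval α = 0 := by
  classical
  have coeff_eq := coeff_eq_sum (v := id) (s := S) (P := P) Function.injective_id.injOn
    (degree_le_natDegree.trans_lt (by exact_mod_cast (by omega : P.natDegree < #S)))
  rw [coeff_eq_zero_of_natDegree_lt (by omega)] at coeff_eq
  rw [coeff_eq]
  refine sum_congr rfl fun α hα => ?_
  have h := eval_nodal_derivative_eval_node_eq (v := id) hα
  rw [eval_nodal] at h
  simp only [id] at h ⊢
  rw [h]

/-- `S` is the support of a codeword of the binary Goppa code `Γ(L, G)`, where `L` is any set of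
non-roots of `G` containing `S`. -/
def IsCodeword (G : K[X]) (S : Finset K) : Prop :=
  (∀ α ∈ S, G.eval α ≠ 0) ∧ ∀ j < G.natDegree, ∑ α ∈ S, α ^ j * (G.eval α)⁻¹ = 0

theorem IsCodeword.dvd_derivative_nodal {G : K[X]} {S : Finset K} (h : IsCodeword G S) :
    G ∣ derivative (nodal S id) := by
  classical
  refine ⟨∑ α ∈ S, C (G.eval α)⁻¹ * nodal (S.erase α) id, ?_⟩
  rw [mul_sum_C_mul_nodal_erase h.2, derivative_nodal]
  refine sum_congr rfl fun α hα => ?_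
  rw [mul_inv_cancel₀ (h.1 α hα), C_1, one_mul]

theorem natDegree_lt_card_of_dvd_derivative_nodal {G : K[X]} {S : Finset K} (hS : S.Nonempty)
    (h : G ∣ derivative (nodal S id)) : G.natDegree < #S := by
  obtain ⟨α, hα⟩ := hS
  have derivative_ne_zero : derivative (nodal S id) ≠ 0 := fun h0 =>
    eval_derivative_nodal_ne_zero hα (by rw [h0, eval_zero])
  calc G.natDegree ≤ (derivative (nodal S id)).natDegree := natDegree_le_of_dvd h derivative_ne_zero
    _ < (nodal S id).natDegree :=
      natDegree_derivative_lt (by rw [natDegree_nodal]; exact (card_pos.mpr ⟨α, hα⟩).ne')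
    _ = #S := natDegree_nodal

theorem isCodeword_of_dvd_derivative_nodal {G : K[X]} {S : Finset K}
    (h : G ∣ derivative (nodal S id)) : IsCodeword G S := by
  obtain ⟨Q, hQ⟩ := h
  have eval_mul_ne_zero : ∀ α ∈ S, G.eval α * Q.eval α ≠ 0 := fun α hα => by
    rw [← eval_mul, ← hQ]
    exact eval_derivative_nodal_ne_zero hα
  refine ⟨fun α hα => left_ne_zero_of_mul (eval_mul_ne_zero α hα), fun j hj => ?_⟩
  obtain rfl | hS := S.eq_empty_or_nonempty
  · simp
  have degree_lt : (X ^ j * Q).natDegree + 1 < #S := by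
    have G_ne_zero : G ≠ 0 := ne_zero_of_natDegree_gt hj
    have Q_ne_zero : Q ≠ 0 := by
      rintro rfl
      obtain ⟨α, hα⟩ := hS
      exact eval_mul_ne_zero α hα (by simp)
    have := natDegree_lt_card_of_dvd_derivative_nodal hS hQ.symm.dvd
    rw [natDegree_mul G_ne_zero Q_ne_zero] at this
    rw [natDegree_X_pow_mul j Q_ne_zero]
    omega
  rw [← sum_eval_div_eval_derivative_nodal degree_lt]
  refine sum_congr rfl fun α hα => ?_
  rw [hQ, eval_mul, eval_mul, eval_X_pow,
    mul_div_mul_right _ _ (right_ne_zero_of_mul (eval_mul_ne_zero α hα)), div_eq_mul_inv]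

theorem isCodeword_iff_dvd_derivative_nodal {G : K[X]} {S : Finset K} :
    IsCodeword G S ↔ G ∣ derivative (nodal S id) :=
  ⟨IsCodeword.dvd_derivative_nodal, isCodeword_of_dvd_derivative_nodal⟩

theorem IsCodeword.natDegree_lt_card {G : K[X]} {S : Finset K} (h : IsCodeword G S)
    (hS : S.Nonempty) : G.natDegree < #S :=
  natDegree_lt_card_of_dvd_derivative_nodal hS h.dvd_derivative_nodal

theorem IsCodeword.mul {G H : K[X]} {S : Finset K} (hG : IsCodeword G S) (hH : IsCodeword H S)
    (hGH : IsCoprime G H) : IsCodeword (G * H) S :=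
  isCodeword_of_dvd_derivative_nodal (hGH.mul_dvd hG.dvd_derivative_nodal hH.dvd_derivative_nodal)

theorem isCodeword_X {S : Finset K} (h0 : 0 ∉ S) (hinv : ∑ α ∈ S, α⁻¹ = 0) : IsCodeword X S := by
  refine ⟨fun α hα => ?_, fun j hj => ?_⟩
  · rw [eval_X]
    exact ne_of_mem_of_not_mem hα h0
  · obtain rfl : j = 0 := by simpa using hj
    simpa using hinv

theorem IsCodeword.sq [CharP K 2] [PerfectRing K 2] {G : K[X]} {S : Finset K}
    (h : IsCodeword G S) (hG : Squarefree G) : IsCodeword (G ^ 2) S := by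
  obtain ⟨r, hr⟩ := exists_derivative_eq_sq (nodal S id)
  rw [isCodeword_iff_dvd_derivative_nodal, hr] at h ⊢
  exact pow_dvd_pow_of_dvd ((hG.dvd_pow_iff_dvd two_ne_zero).mp h) 2

end Codeword

section GoppaPolynomial

variable {K : Type*} [Field K] {l : ℕ} {S : Finset K}

/-- The Goppa polynomial `G₄`, normalized to `A = 1`, whose code has minimum distance `2 * t + 3`
when `t = 2 ^ l` and `2 ≤ l`. The exponent `t - 1` is truncated at `t = 0`. -/
noncomputable def goppaPoly (K : Type*) [Field K] (t : ℕ) : K[X] :=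
  X ^ t + X ^ (t - 1) + 1

theorem eval_goppaPoly (t : ℕ) (α : K) : (goppaPoly K t).eval α = α ^ t + α ^ (t - 1) + 1 := by
  simp [goppaPoly]

theorem natDegree_goppaPoly {t : ℕ} (ht : t ≠ 0) : (goppaPoly K t).natDegree = t := by
  have tail_degree : (X ^ (t - 1) + 1 : K[X]).natDegree ≤ t - 1 := by compute_degree
  rw [goppaPoly, add_assoc,
    natDegree_add_eq_left_of_natDegree_lt (by rw [natDegree_X_pow]; omega), natDegree_X_pow]

theorem isCodeword_goppaPoly_iff {t : ℕ} (ht : t ≠ 0) :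
    IsCodeword (goppaPoly K t) S ↔ (∀ α ∈ S, α ^ t + α ^ (t - 1) + 1 ≠ 0) ∧
      ∀ j < t, ∑ α ∈ S, α ^ j * (α ^ t + α ^ (t - 1) + 1)⁻¹ = 0 := by
  simp only [IsCodeword, eval_goppaPoly, natDegree_goppaPoly ht]

theorem X_mul_goppaPoly [CharP K 2] (l : ℕ) :
    X * goppaPoly K (2 ^ l) = (X + 1) ^ (2 ^ l + 1) - 1 := by
  have X_mul_X_pow : (X : K[X]) * X ^ (2 ^ l - 1) = X ^ 2 ^ l :=
    mul_pow_sub_one (by positivity) X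
  rw [pow_succ, add_pow_char_pow, one_pow, goppaPoly, mul_add, mul_add, X_mul_X_pow]
  ring

theorem separable_X_mul_goppaPoly [CharP K 2] (hl : l ≠ 0) :
    (X * goppaPoly K (2 ^ l)).Separable := by
  have derivative_eq : derivative (X * goppaPoly K (2 ^ l)) = (X + 1) ^ 2 ^ l := by
    rw [X_mul_goppaPoly]
    simp [derivative_pow, hl, CharTwo.two_eq_zero]
  rw [Separable, derivative_eq, X_mul_goppaPoly]
  exact ⟨-1, X + 1, by ring⟩

theorem mul_eval_goppaPoly_pow [CharP K 2] (hK : ∀ x : K, (x ^ 2 ^ l) ^ 2 ^ l = x) (α : K) :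
    (α * (goppaPoly K (2 ^ l)).eval α) ^ 2 ^ l = α * (goppaPoly K (2 ^ l)).eval α := by
  have norm_eq : α * (goppaPoly K (2 ^ l)).eval α = (α + 1) ^ (2 ^ l + 1) - 1 := by
    simpa using congrArg (eval α) (X_mul_goppaPoly (K := K) l)
  rw [norm_eq, sub_pow_char_pow, one_pow, pow_succ, mul_pow, hK, mul_comm]

theorem pow_mul_inv_eval_goppaPoly_pow [CharP K 2] (hK : ∀ x : K, (x ^ 2 ^ l) ^ 2 ^ l = x)
    {k : ℕ} (hk : k ≤ 2 ^ l) {α : K} (hα : α ≠ 0) :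
    (α ^ (2 ^ l - k) * ((goppaPoly K (2 ^ l)).eval α ^ k)⁻¹) ^ 2 ^ l =
      α * ((α * (goppaPoly K (2 ^ l)).eval α) ^ k)⁻¹ := by
  set g := (goppaPoly K (2 ^ l)).eval α with hg
  have clear_denom : α ^ (2 ^ l - k) * (g ^ k)⁻¹ = α ^ 2 ^ l * ((α * g) ^ k)⁻¹ := by
    rw [pow_sub₀ α hα hk, mul_pow, mul_inv, mul_assoc]
  rw [clear_denom, mul_pow, hK, inv_pow, pow_right_comm, hg, mul_eval_goppaPoly_pow hK]

theorem inv_eval_goppaPoly_sub_pow [CharP K 2] [DecidableEq K] (hl : l ≠ 0)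
    (hK : ∀ x : K, (x ^ 2 ^ l) ^ 2 ^ l = x) (α : K) :
    ((goppaPoly K (2 ^ l)).eval α)⁻¹ -
      (α ^ (2 ^ l - 1) * ((goppaPoly K (2 ^ l)).eval α)⁻¹) ^ 2 ^ l = if α = 0 then 1 else 0 := by
  have t_gt_one : 1 < 2 ^ l := Nat.one_lt_two_pow hl
  split_ifs with hα
  · have t_sub_one_ne_zero : 2 ^ l - 1 ≠ 0 := by omega
    simp [hα, eval_goppaPoly, zero_pow t_sub_one_ne_zero]
  · have h := pow_mul_inv_eval_goppaPoly_pow hK t_gt_one.le hα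
    rw [pow_one, pow_one, mul_inv, mul_inv_cancel_left₀ hα] at h
    rw [h, sub_self]

theorem inv_eq_add_pow_mul_inv_sq_goppaPoly [CharP K 2] (hl : l ≠ 0)
    (hK : ∀ x : K, (x ^ 2 ^ l) ^ 2 ^ l = x) {α : K} (hα : α ≠ 0)
    (hg : (goppaPoly K (2 ^ l)).eval α ≠ 0) :
    α⁻¹ = α ^ (2 * 2 ^ l - 1) * ((goppaPoly K (2 ^ l)).eval α ^ 2)⁻¹ +
      α ^ (2 * 2 ^ l - 3) * ((goppaPoly K (2 ^ l)).eval α ^ 2)⁻¹ +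
      (α ^ (2 ^ l - 2) * ((goppaPoly K (2 ^ l)).eval α ^ 2)⁻¹) ^ 2 ^ l := by
  have two_le_t : 2 ≤ 2 ^ l := Nat.one_lt_two_pow hl
  rw [pow_mul_inv_eval_goppaPoly_pow hK two_le_t hα]
  set g := (goppaPoly K (2 ^ l)).eval α with hg_def
  have g_sq : g ^ 2 = α ^ (2 * 2 ^ l - 1) * α + α ^ (2 * 2 ^ l - 3) * α + 1 := by
    rw [hg_def, eval_goppaPoly, CharTwo.add_sq, CharTwo.add_sq, one_pow, ← pow_mul', ← pow_mul',
      ← pow_succ, ← pow_succ, Nat.sub_add_cancel (by omega : 1 ≤ 2 * 2 ^ l),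
      show 2 * 2 ^ l - 3 + 1 = 2 * (2 ^ l - 1) by omega]
  field_simp
  linear_combination g_sq

theorem IsCodeword.zero_notMem_of_goppaPoly [CharP K 2] (hl : l ≠ 0)
    (hK : ∀ x : K, (x ^ 2 ^ l) ^ 2 ^ l = x) (h : IsCodeword (goppaPoly K (2 ^ l)) S) : 0 ∉ S := by
  classical
  have t_pos : 0 < 2 ^ l := by positivity
  have parity_check := h.2
  rw [natDegree_goppaPoly t_pos.ne'] at parity_check
  have sum_eq_zero : ∑ α ∈ S, (if α = 0 then (1 : K) else 0) = 0 := by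
    simp only [← inv_eval_goppaPoly_sub_pow hl hK]
    rw [sum_sub_distrib, ← sum_pow_char_pow, parity_check _ (Nat.sub_lt t_pos one_pos),
      zero_pow t_pos.ne', sub_zero]
    simpa using parity_check 0 t_pos
  simpa using sum_eq_zero

theorem IsCodeword.sum_inv_eq_zero_of_goppaPoly [CharP K 2] (hl : l ≠ 0)
    (hK : ∀ x : K, (x ^ 2 ^ l) ^ 2 ^ l = x) (h0 : 0 ∉ S)
    (h : IsCodeword (goppaPoly K (2 ^ l) ^ 2) S) : ∑ α ∈ S, α⁻¹ = 0 := by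
  have two_le_t : 2 ≤ 2 ^ l := Nat.one_lt_two_pow hl
  obtain ⟨eval_ne_zero, parity_check⟩ := h
  simp only [eval_pow, natDegree_pow, natDegree_goppaPoly (by omega : 2 ^ l ≠ 0)]
    at eval_ne_zero parity_check
  rw [sum_congr rfl fun α hα => inv_eq_add_pow_mul_inv_sq_goppaPoly hl hK
    (ne_of_mem_of_not_mem hα h0) (ne_zero_pow two_ne_zero (eval_ne_zero α hα))]
  rw [sum_add_distrib, sum_add_distrib, ← sum_pow_char_pow, parity_check _ (by omega),
    parity_check _ (by omega), parity_check _ (by omega), zero_pow (by omega), add_zero, add_zero]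

theorem IsCodeword.two_mul_add_three_le_card_of_goppaPoly [CharP K 2] [PerfectRing K 2]
    (hl : l ≠ 0) (hK : ∀ x : K, (x ^ 2 ^ l) ^ 2 ^ l = x)
    (h : IsCodeword (goppaPoly K (2 ^ l)) S) (hS : S.Nonempty) : 2 * 2 ^ l + 3 ≤ #S := by
  have separable := separable_X_mul_goppaPoly (K := K) hl
  have zero_notMem := h.zero_notMem_of_goppaPoly hl hK
  have codeword_X : IsCodeword X S := isCodeword_X zero_notMem
    ((h.sq separable.of_mul_right.squarefree).sum_inv_eq_zero_of_goppaPoly hl hK zero_notMem)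
  have codeword_sq : IsCodeword ((X * goppaPoly K (2 ^ l)) ^ 2) S :=
    (codeword_X.mul h separable.isCoprime).sq separable.squarefree
  have natDegree_eq : (X * goppaPoly K (2 ^ l)).natDegree = 2 ^ l + 1 := by
    have natDegree_goppa := natDegree_goppaPoly (K := K) (pow_ne_zero l two_ne_zero)
    rw [natDegree_X_mul (ne_zero_of_natDegree_gt (natDegree_goppa ▸ Nat.two_pow_pos l)),
      natDegree_goppa]
  have degree_lt := codeword_sq.natDegree_lt_card hS
  rw [natDegree_pow, natDegree_eq] at degree_lt
  omega

end GoppaPolynomial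

section MinimumWeight

variable {K : Type*} [Field K]

theorem exists_nodal_eq_of_splits {P : K[X]} (hmonic : P.Monic) (hsplits : P.Splits)
    (hsep : P.Separable) : ∃ S : Finset K, nodal S id = P :=
  ⟨⟨P.roots, nodup_roots hsep⟩, (hsplits.eq_prod_roots_of_monic hmonic).symm⟩

theorem isCoprime_X_pow_sub_C (n : ℕ) {a b : K} (hab : a ≠ b) :
    IsCoprime (X ^ n - C a : K[X]) (X ^ n - C b) := by
  simpa using (isCoprime_X_sub_C_of_isUnit_sub (sub_ne_zero.mpr hab).isUnit).map
    (compRingHom (X ^ n))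

theorem derivative_X_mul_X_pow_sub_C_mul [CharP K 2] {n : ℕ} (hn : Odd n) {a : K} (ha : a ≠ 0) :
    derivative (X * (X ^ n - C a) * (X ^ n - C a⁻¹)) = (X ^ n - 1) ^ 2 := by
  have C_mul_C_inv : (C a * C a⁻¹ : K[X]) = 1 := by rw [← C_mul, mul_inv_cancel₀ ha, C_1]
  have expansion : X * (X ^ n - C a) * (X ^ n - C a⁻¹) =
      X ^ (2 * n + 1) - C (a + a⁻¹) * X ^ (n + 1) + X := by
    rw [C_add]
    linear_combination X * C_mul_C_inv
  have cast_odd : ((2 * n + 1 : ℕ) : K) = 1 :=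
    natCast_eq_one_of_odd_of_two_eq_zero (odd_two_mul_add_one n) CharTwo.two_eq_zero
  have cast_even : ((n + 1 : ℕ) : K) = 0 :=
    natCast_eq_zero_of_even_of_two_eq_zero hn.add_one CharTwo.two_eq_zero
  rw [expansion, derivative_add, derivative_sub, derivative_C_mul, derivative_X_pow,
    derivative_X_pow, derivative_X, cast_odd, cast_even, CharTwo.sub_eq_add (X ^ n),
    CharTwo.add_sq, C_1, C_0, zero_mul, mul_zero, sub_zero, one_mul, one_pow, ← pow_mul',
    Nat.add_sub_cancel]

theorem separable_X_mul_X_pow_sub_C_mul [CharP K 2] {n : ℕ} (hn : Odd n) {a : K} (ha : a ≠ 0)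
    (ha1 : a ≠ 1) : (X * (X ^ n - C a) * (X ^ n - C a⁻¹)).Separable := by
  rw [Separable, derivative_X_mul_X_pow_sub_C_mul hn ha, ← C_1]
  have coprime_X : IsCoprime X (X ^ n - C 1 : K[X]) := by
    have h := isCoprime_X_pow_sub_C n (zero_ne_one (α := K))
    rwa [C_0, sub_zero, IsCoprime.pow_left_iff hn.pos] at h
  exact ((coprime_X.mul_left (isCoprime_X_pow_sub_C n ha1)).mul_left
    (isCoprime_X_pow_sub_C n (inv_ne_one.mpr ha1))).pow_right

theorem exists_card_eq_and_derivative_nodal_eq [CharP K 2] {n : ℕ} (hn : Odd n) {ζ y : K}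
    (hζ : IsPrimitiveRoot ζ n) (hy : y ≠ 0) (hy1 : y ^ n ≠ 1) :
    ∃ S : Finset K, #S = 2 * n + 1 ∧ derivative (nodal S id) = ((X + 1) ^ n - 1) ^ 2 := by
  set P : K[X] := X * (X ^ n - C (y ^ n)) * (X ^ n - C (y ^ n)⁻¹) with hP
  have yn_ne_zero : y ^ n ≠ 0 := pow_ne_zero n hy
  have monic (a : K) : (X ^ n - C a).Monic := monic_X_pow_sub_C a hn.pos.ne'
  have splits_P : P.Splits :=
    (Splits.X.mul (X_pow_sub_C_splits_of_isPrimitiveRoot hζ rfl)).mul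
      (X_pow_sub_C_splits_of_isPrimitiveRoot hζ (inv_pow y n))
  have monic_P : P.Monic := (monic_X.mul (monic _)).mul (monic _)
  have natDegree_P : P.natDegree = 2 * n + 1 := by
    rw [hP, (monic_X.mul (monic _)).natDegree_mul (monic _), monic_X.natDegree_mul (monic _),
      natDegree_X, natDegree_X_pow_sub_C, natDegree_X_pow_sub_C]
    ring
  obtain ⟨S, hS⟩ := exists_nodal_eq_of_splits (monic_P.comp_X_add_C 1) (splits_P.comp_X_add_C 1)
    (separable_comp_X_add_C (separable_X_mul_X_pow_sub_C_mul hn yn_ne_zero hy1) 1)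
  refine ⟨S, ?_, ?_⟩
  · rw [← natDegree_nodal (s := S) (v := id), hS, natDegree_comp, natDegree_P, natDegree_X_add_C,
      mul_one]
  · rw [hS, derivative_comp, derivative_X_mul_X_pow_sub_C_mul hn yn_ne_zero]
    simp

theorem exists_isPrimitiveRoot_natCard_sub_one [Finite K] :
    ∃ g : K, IsPrimitiveRoot g (Nat.card K - 1) := by
  obtain ⟨g, hg⟩ := IsCyclic.exists_ofOrder_eq_natCard (α := Kˣ)
  rw [Nat.card_units] at hg
  exact ⟨g, IsPrimitiveRoot.coe_units_iff.mpr (hg ▸ IsPrimitiveRoot.orderOf g)⟩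

theorem exists_isCodeword_goppaPoly_card_eq [CharP K 2] {l : ℕ} (hl : 2 ≤ l) {g : K}
    (hg : IsPrimitiveRoot g ((2 ^ l) ^ 2 - 1)) :
    ∃ S : Finset K, IsCodeword (goppaPoly K (2 ^ l)) S ∧ #S = 2 * 2 ^ l + 3 := by
  have four_le_t : 2 ^ 2 ≤ 2 ^ l := Nat.pow_le_pow_right two_pos hl
  have order_eq : (2 ^ l) ^ 2 - 1 = (2 ^ l - 1) * (2 ^ l + 1) := by
    rw [mul_comm, ← Nat.sq_sub_sq, one_pow]
  have order_gt : 2 ^ l + 1 < (2 ^ l) ^ 2 - 1 := by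
    rw [order_eq]
    exact lt_mul_of_one_lt_left (by omega) (by omega)
  obtain ⟨S, card_S, derivative_S⟩ := exists_card_eq_and_derivative_nodal_eq
    (even_two.pow_of_ne_zero (by omega)).add_one (hg.pow (by omega) order_eq)
    (hg.ne_zero (by omega)) (hg.pow_ne_one_of_pos_of_lt (by omega) order_gt)
  refine ⟨S, isCodeword_of_dvd_derivative_nodal ?_, by omega⟩
  rw [derivative_S, ← X_mul_goppaPoly]
  exact (dvd_mul_left _ _).trans (dvd_pow_self _ two_ne_zero)

end MinimumWeight

end GoppaCode

/-- Paper's Lemma 12 (normalized to `A = 1`): for `l ≥ 2`, `F = GF(2^(2l))`, `t = 2^l`,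
`L₄ = {α : α^t + α^(t-1) + 1 ≠ 0}`, the minimum distance of the binary Goppa code
`Γ(L₄, X^t + X^(t-1) + 1)` equals exactly `2(t+1) + 1 = 2t + 3`. -/
theorem stmt_18 (l : ℕ) (hl : 2 ≤ l) (t : ℕ) (ht : t = 2 ^ l) :
    (∀ S : Finset (GaloisField 2 (2 * l)),
        (∀ α ∈ S, α ^ t + α ^ (t - 1) + 1 ≠ 0) →
        (∀ j < t, ∑ α ∈ S, α ^ j * (α ^ t + α ^ (t - 1) + 1)⁻¹ = 0) →
        S.Nonempty → 2 * t + 3 ≤ S.card) ∧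
    (∃ S : Finset (GaloisField 2 (2 * l)),
        (∀ α ∈ S, α ^ t + α ^ (t - 1) + 1 ≠ 0) ∧
        (∀ j < t, ∑ α ∈ S, α ^ j * (α ^ t + α ^ (t - 1) + 1)⁻¹ = 0) ∧
        S.card = 2 * t + 3) := by
  subst ht
  have hl0 : l ≠ 0 := by omega
  have t_ne_zero : 2 ^ l ≠ 0 := pow_ne_zero l two_ne_zero
  have natCard_eq : Nat.card (GaloisField 2 (2 * l)) = (2 ^ l) ^ 2 := by
    rw [GaloisField.card 2 _ (by omega), ← pow_mul, mul_comm]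
  have frobenius_involutive (x : GaloisField 2 (2 * l)) : (x ^ 2 ^ l) ^ 2 ^ l = x := by
    have := Fintype.ofFinite (GaloisField 2 (2 * l))
    rw [← pow_mul, ← sq, ← natCard_eq, Nat.card_eq_fintype_card, FiniteField.pow_card]
  refine ⟨fun S ne_zero parity_check hS => ?_, ?_⟩
  · exact ((GoppaCode.isCodeword_goppaPoly_iff t_ne_zero).mpr
      ⟨ne_zero, parity_check⟩).two_mul_add_three_le_card_of_goppaPoly hl0 frobenius_involutive hS
  · obtain ⟨g, hg⟩ := GoppaCode.exists_isPrimitiveRoot_natCard_sub_one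
      (K := GaloisField 2 (2 * l))
    rw [natCard_eq] at hg
    obtain ⟨S, codeword_S, card_S⟩ := GoppaCode.exists_isCodeword_goppaPoly_card_eq hl hg
    obtain ⟨ne_zero, parity_check⟩ := (GoppaCode.isCodeword_goppaPoly_iff t_ne_zero).mp codeword_S
    exact ⟨S, ne_zero, parity_check, card_S⟩
end
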